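/- There exists a constant C > 0 such that for every f in the Zygmund space LlogL(-1,1), the finite Hilbert transform T(f) belongs to L^1(-1,1) and ‖T(f)‖_{L^1} ≤ C ‖f‖_{LlogL}. In particular, T : LlogL(-1,1) → L^1(-1,1) is a bounded linear operator. -/

import Mathlib

open MeasureTheory Set Filter

noncomputable section

/-- Lebesgue measure restricted to the interval `(-1, 1)`. -/
def μI : Measure ℝ := volume.restrict (Set.Ioo (-1 : ℝ) 1)

/-- The finite Hilbert transform: the principal-value limit
`T(f)(t) = lim_{ε→0⁺} (1/π) ∫_{x∈(-1,1), |x-t|≥ε} f(x)/(x-t) dx`. -/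
def FHT (f : ℝ → ℂ) (t : ℝ) : ℂ :=
  limUnder (nhdsWithin (0 : ℝ) (Set.Ioi 0)) fun ε : ℝ =>
    (Real.pi : ℂ)⁻¹ *
      ∫ x in {x : ℝ | x ∈ Set.Ioo (-1 : ℝ) 1 ∧ ε ≤ |x - t|}, f x / ((x : ℂ) - (t : ℂ))

/-- The operator `T̂(g)(x) = -(1-x²)^{-1/2} T(t ↦ √(1-t²) g(t))(x)`. -/
def hatT (g : ℝ → ℂ) (x : ℝ) : ℂ :=
  -((Real.sqrt (1 - x ^ 2) : ℂ))⁻¹ * FHT (fun t => (Real.sqrt (1 - t ^ 2) : ℂ) * g t) x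

/-- Membership in the Zygmund space `L log L(-1,1)`:
`f` is a.e. measurable on `(-1,1)` and `∫ |f| log⁺|f| < ∞`. -/
def MemLlogL (f : ℝ → ℂ) : Prop :=
  AEStronglyMeasurable f μI ∧
    IntegrableOn (fun x => ‖f x‖ * max (Real.log ‖f x‖) 0) (Set.Ioo (-1 : ℝ) 1)

/-- The distribution function `λ ↦ |{x ∈ (-1,1) : |f(x)| > λ}|`. -/
def distFun (f : ℝ → ℂ) (lam : ℝ) : ℝ :=
  (volume {x : ℝ | x ∈ Set.Ioo (-1 : ℝ) 1 ∧ lam < ‖f x‖}).toReal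

/-- The decreasing rearrangement `f*` of `f`, a function on `(0,2)`. -/
def decRearr (f : ℝ → ℂ) (t : ℝ) : ℝ :=
  sInf {lam : ℝ | 0 ≤ lam ∧ distFun f lam ≤ t}

/-- The `L log L` norm `‖f‖ = ∫_0^2 f*(t) log(2e/t) dt`. -/
def llogLNorm (f : ℝ → ℂ) : ℝ :=
  ∫ t in Set.Ioo (0 : ℝ) 2, decRearr f t * Real.log (2 * Real.exp 1 / t)

/-- The `L(log L)^α` norm `∫_0^2 f*(t) log^α(2e/t) dt` (for `α = 0` this is the `L¹` norm). -/
def zygNorm (α : ℝ) (f : ℝ → ℂ) : ℝ :=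
  ∫ t in Set.Ioo (0 : ℝ) 2, decRearr f t * Real.log (2 * Real.exp 1 / t) ^ α

/-- Membership in the Zygmund space `L(log L)^α(-1,1)`. -/
def MemZyg (α : ℝ) (f : ℝ → ℂ) : Prop :=
  AEStronglyMeasurable f μI ∧
    IntegrableOn (fun t => decRearr f t * Real.log (2 * Real.exp 1 / t) ^ α)
      (Set.Ioo (0 : ℝ) 2)

/-- Membership in `L(log L)²(-1,1)`: `∫ |f| (log(2+|f|))² < ∞`. -/
def MemLlogL2 (f : ℝ → ℂ) : Prop :=
  AEStronglyMeasurable f μI ∧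
    IntegrableOn (fun x => ‖f x‖ * Real.log (2 + ‖f x‖) ^ 2) (Set.Ioo (-1 : ℝ) 1)

/-- The constant `c(β,γ) = max{1/(1-β), 1/(1-γ), 1/(β+γ-1)}`. -/
def cBG (β γ : ℝ) : ℝ := max (max (1 / (1 - β)) (1 / (1 - γ))) (1 / (β + γ - 1))

/-!
For `h ≥ 0` the Schwarz integral `S` of `h dt` is holomorphic on the upper half-plane. At height `y`
its real part is the Poisson integral of `h`, and its imaginary part differs from the Hilbert
transform of `h` truncated at distance `y` by an average that tends to `0` at Lebesgue points. The
function `G = 1 + S` satisfies `re G ≥ 1`, so `1 / G` is bounded and has boundary values almost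
everywhere (Fatou); these are almost everywhere nonzero because the nonnegative harmonic function
`log ‖G‖` has bounded means on horizontal lines. Hence the principal value exists almost everywhere.

The `L¹` bound is Zygmund's: `|im w| ≤ 3 re w + 4 (re w log (re w) - re (w log w))` for `re w > 0`.
Since `G log G` is holomorphic, its Poisson mean is its value at one point, and Jensen's inequality
leaves `∫ (1 + h) log (1 + h)`; Fatou's lemma then lets the height tend to `0`. Applying this to the
parts of `f / c` with `c ≥ ‖f‖_{L log L}` gives the norm bound, because `t f*(t) ≤ ‖f‖_{L log L}`
yields `log (1 + f*(t) / c) ≤ log (2e / t)`.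
-/

section

open ProbabilityTheory Metric
open Complex (I)
open scoped Real Topology ENNReal NNReal

section CauchyMeasure

variable {E : Type*} [NormedAddCommGroup E] [NormedSpace ℝ E] {x : ℝ} {γ : ℝ≥0}

lemma cauchyPDFReal_nonneg (x : ℝ) (γ : ℝ≥0) (t : ℝ) : 0 ≤ cauchyPDFReal x γ t := by
  rw [cauchyPDFReal_def]
  positivity

lemma continuous_cauchyPDFReal (x : ℝ) (γ : ℝ≥0) : Continuous (cauchyPDFReal x γ) := by
  rw [funext (cauchyPDFReal_def' x γ)]
  exact continuous_const.mul <| Continuous.inv₀ (by fun_prop) fun t ↦ by positivity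

lemma cauchyPDFReal_comm (x : ℝ) (γ : ℝ≥0) (t : ℝ) :
    cauchyPDFReal x γ t = cauchyPDFReal t γ x := by
  rw [cauchyPDFReal_def, cauchyPDFReal_def, ← neg_sub, neg_sq]

lemma cauchyPDFReal_zero_one_le_one (t : ℝ) : cauchyPDFReal 0 1 t ≤ 1 := by
  have hpi : π⁻¹ ≤ 1 := inv_le_one_of_one_le₀ (by linarith [Real.pi_gt_three])
  have ht : (t ^ 2 + 1)⁻¹ ≤ 1 := inv_le_one_of_one_le₀ (by nlinarith [sq_nonneg t])
  simpa [cauchyPDFReal_def] using mul_le_one₀ hpi (by positivity) ht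

lemma cauchyPDFReal_le_const_mul (x x' : ℝ) (hγ : γ ≠ 0) {γ' : ℝ≥0} (hγ' : γ' ≠ 0) (t : ℝ) :
    cauchyPDFReal x γ t ≤
      γ / γ' * (2 + (2 * (x - x') ^ 2 + γ' ^ 2) / γ ^ 2) * cauchyPDFReal x' γ' t := by
  rw [cauchyPDFReal_def, cauchyPDFReal_def]
  have key : (t - x') ^ 2 + (γ' : ℝ) ^ 2 ≤
      (2 + (2 * (x - x') ^ 2 + γ' ^ 2) / γ ^ 2) * ((t - x) ^ 2 + γ ^ 2) := by
    have hsplit : (2 + (2 * (x - x') ^ 2 + (γ' : ℝ) ^ 2) / γ ^ 2) * ((t - x) ^ 2 + γ ^ 2) =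
        2 * (t - x) ^ 2 + 2 * γ ^ 2 + (2 * (x - x') ^ 2 + γ' ^ 2) +
          (2 * (x - x') ^ 2 + γ' ^ 2) / γ ^ 2 * (t - x) ^ 2 := by
      field_simp
      ring
    have hrest : 0 ≤ (2 * (x - x') ^ 2 + (γ' : ℝ) ^ 2) / γ ^ 2 * (t - x) ^ 2 := by positivity
    nlinarith [sq_nonneg ((t - x) - (x - x')), sq_nonneg (γ : ℝ)]
  calc π⁻¹ * γ * ((t - x) ^ 2 + (γ : ℝ) ^ 2)⁻¹
      ≤ π⁻¹ * γ * ((2 + (2 * (x - x') ^ 2 + γ' ^ 2) / γ ^ 2) *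
          ((t - x') ^ 2 + (γ' : ℝ) ^ 2)⁻¹) := by
        gcongr
        rwa [← div_eq_mul_inv, le_div_iff₀ (by positivity), inv_mul_le_iff₀ (by positivity),
          mul_comm]
    _ = _ := by field_simp

lemma cauchyPDFReal_le_of_le_abs_sub {r : ℝ≥0} (hr : r ≠ 0) {t : ℝ} (ht : r ≤ |t - x|) :
    cauchyPDFReal x γ t ≤ 2 * γ / r * cauchyPDFReal x r t := by
  have hsq : (r : ℝ) ^ 2 ≤ (t - x) ^ 2 := by
    rw [← sq_abs (t - x)]
    gcongr
  rw [cauchyPDFReal_def, cauchyPDFReal_def]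
  calc π⁻¹ * γ * ((t - x) ^ 2 + (γ : ℝ) ^ 2)⁻¹
      ≤ π⁻¹ * γ * (((t - x) ^ 2 + (r : ℝ) ^ 2) / 2)⁻¹ := by
        gcongr
        nlinarith [sq_nonneg (γ : ℝ)]
    _ = _ := by field_simp

lemma setOf_lt_cauchyPDFReal_eq_ball (x : ℝ) (hγ : γ ≠ 0) {s : ℝ} (hs : 0 < s) :
    {t | s < cauchyPDFReal x γ t} = ball x √(π⁻¹ * γ / s - γ ^ 2) := by
  ext t
  rw [mem_ofPred_eq, mem_ball, Real.dist_eq, Real.lt_sqrt (abs_nonneg _), sq_abs,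
    cauchyPDFReal_def, ← div_eq_mul_inv, lt_div_iff₀ (by positivity), lt_sub_iff_add_lt,
    lt_div_iff₀ hs, mul_comm s]

lemma integral_cauchyMeasure (x : ℝ) (hγ : γ ≠ 0) (f : ℝ → E) :
    ∫ t, f t ∂cauchyMeasure x γ = ∫ t, cauchyPDFReal x γ t • f t := by
  rw [cauchyMeasure_of_scale_ne_zero x hγ, integral_withDensity_eq_integral_toReal_smul
    (measurable_cauchyPDF x γ) (by simp [cauchyPDF])]
  simp only [cauchyPDF, ENNReal.toReal_ofReal (cauchyPDFReal_nonneg x γ _)]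

lemma integral_cauchyMeasure_eq_integral_zero_one (x : ℝ) (hγ : γ ≠ 0) (f : ℝ → E) :
    ∫ t, f t ∂cauchyMeasure x γ = ∫ t, f (x + γ * t) ∂cauchyMeasure 0 1 := by
  rw [integral_cauchyMeasure x hγ, integral_cauchyMeasure 0 one_ne_zero]
  calc ∫ t, cauchyPDFReal x γ t • f t
      = ∫ t, cauchyPDFReal x γ (x + t) • f (x + t) := (integral_add_left_eq_self _ x).symm
    _ = (γ : ℝ) • ∫ t, cauchyPDFReal x γ (x + γ * t) • f (x + γ * t) := by
        rw [Measure.integral_comp_mul_left fun t ↦ cauchyPDFReal x γ (x + t) • f (x + t),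
          abs_of_nonneg (by positivity), smul_inv_smul₀ (by positivity)]
    _ = ∫ t, cauchyPDFReal 0 1 t • f (x + γ * t) := by
        rw [← integral_smul]
        refine integral_congr_ae (.of_forall fun t ↦ ?_)
        simp only [smul_smul, cauchyPDFReal_def, NNReal.coe_one]
        congr 1
        field_simp
        ring

lemma lintegral_cauchyMeasure (x : ℝ) (hγ : γ ≠ 0) (f : ℝ → ℝ≥0∞) :
    ∫⁻ t, f t ∂cauchyMeasure x γ = ∫⁻ t, cauchyPDF x γ t * f t := by
  rw [cauchyMeasure_of_scale_ne_zero x hγ]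
  exact lintegral_withDensity_eq_lintegral_mul_non_measurable _ (measurable_cauchyPDF x γ)
    (by simp [cauchyPDF]) f

lemma integrable_cauchyMeasure_iff (x : ℝ) (hγ : γ ≠ 0) {f : ℝ → E} :
    Integrable f (cauchyMeasure x γ) ↔ Integrable (fun t ↦ cauchyPDFReal x γ t • f t) := by
  rw [cauchyMeasure_of_scale_ne_zero x hγ, integrable_withDensity_iff_integrable_smul'
    (measurable_cauchyPDF x γ) (by simp [cauchyPDF])]
  simp only [cauchyPDF, ENNReal.toReal_ofReal (cauchyPDFReal_nonneg x γ _)]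

lemma cauchyMeasure_absolutelyContinuous (x : ℝ) (hγ : γ ≠ 0) : cauchyMeasure x γ ≪ volume := by
  rw [cauchyMeasure_of_scale_ne_zero x hγ]
  exact withDensity_absolutelyContinuous _ _

lemma absolutelyContinuous_cauchyMeasure (x : ℝ) (hγ : γ ≠ 0) : volume ≪ cauchyMeasure x γ := by
  rw [cauchyMeasure_of_scale_ne_zero x hγ]
  refine withDensity_absolutelyContinuous' (measurable_cauchyPDF x γ).aemeasurable ?_
  exact .of_forall fun t ↦ (ENNReal.ofReal_pos.2 (cauchyPDF_pos x hγ t)).ne'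

lemma cauchyMeasure_le_smul (x x' : ℝ) (hγ : γ ≠ 0) {γ' : ℝ≥0} (hγ' : γ' ≠ 0) :
    cauchyMeasure x γ ≤ ENNReal.ofReal
      (γ / γ' * (2 + (2 * (x - x') ^ 2 + γ' ^ 2) / γ ^ 2)) • cauchyMeasure x' γ' := by
  rw [cauchyMeasure_of_scale_ne_zero x hγ, cauchyMeasure_of_scale_ne_zero x' hγ',
    ← withDensity_smul _ (measurable_cauchyPDF x' γ')]
  refine withDensity_mono (.of_forall fun t ↦ ?_)
  rw [Pi.smul_apply, smul_eq_mul, cauchyPDF, cauchyPDF, ← ENNReal.ofReal_mul (by positivity)]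
  exact ENNReal.ofReal_le_ofReal (cauchyPDFReal_le_const_mul x x' hγ hγ' t)

lemma integrable_cauchyMeasure_congr {F : Type*} [NormedAddCommGroup F] (x x' : ℝ) (hγ : γ ≠ 0)
    {γ' : ℝ≥0} (hγ' : γ' ≠ 0) {f : ℝ → F} :
    Integrable f (cauchyMeasure x γ) ↔ Integrable f (cauchyMeasure x' γ') :=
  ⟨fun hf ↦ hf.of_measure_le_smul ENNReal.ofReal_ne_top (cauchyMeasure_le_smul x' x hγ' hγ),
    fun hf ↦ hf.of_measure_le_smul ENNReal.ofReal_ne_top (cauchyMeasure_le_smul x x' hγ hγ')⟩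

lemma integrable_cauchyMeasure_of_integrable {f : ℝ → E} (hf : Integrable f) (x : ℝ)
    (hγ : γ ≠ 0) : Integrable f (cauchyMeasure x γ) := by
  rw [integrable_cauchyMeasure_iff x hγ]
  refine hf.bdd_smul (π⁻¹ * γ * ((γ : ℝ) ^ 2)⁻¹) (by fun_prop) (.of_forall fun t ↦ ?_)
  rw [Real.norm_of_nonneg (cauchyPDFReal_nonneg x γ t), cauchyPDFReal_def]
  gcongr
  exact le_add_of_nonneg_left (sq_nonneg _)

lemma locallyIntegrable_of_integrable_cauchyMeasure {f : ℝ → E} (hγ : γ ≠ 0)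
    (hf : Integrable f (cauchyMeasure x γ)) : LocallyIntegrable f := by
  have hpdf (t : ℝ) : 0 < cauchyPDFReal x γ t := cauchyPDF_pos x hγ t
  have hcont : Continuous fun t ↦ (cauchyPDFReal x γ t)⁻¹ :=
    (continuous_cauchyPDFReal x γ).inv₀ fun t ↦ (hpdf t).ne'
  refine (((integrable_cauchyMeasure_iff x hγ).1 hf).locallyIntegrable.continuous_smul
    hcont).congr ?_
  exact .of_forall fun t ↦ inv_smul_smul₀ (hpdf t).ne' (f t)

end CauchyMeasure

section LebesguePoint

variable {E : Type*} [NormedAddCommGroup E] [NormedSpace ℝ E] {x : ℝ}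

lemma lintegral_cauchyPDF_le_of_measure_ball_le {μ : Measure ℝ} {D : ℝ≥0∞}
    (hD : ∀ r, μ (ball x r) ≤ D * volume (ball x r)) {γ : ℝ≥0} (hγ : γ ≠ 0) :
    ∫⁻ t, cauchyPDF x γ t ∂μ ≤ D := by
  have layer_cake (m : Measure ℝ) : ∫⁻ t, cauchyPDF x γ t ∂m =
      ∫⁻ s in Ioi (0 : ℝ), m (ball x √(π⁻¹ * γ / s - γ ^ 2)) := by
    simp only [cauchyPDF]
    rw [lintegral_eq_lintegral_meas_lt m (.of_forall (cauchyPDFReal_nonneg x γ))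
      (continuous_cauchyPDFReal x γ).aemeasurable]
    exact setLIntegral_congr_fun measurableSet_Ioi fun s hs ↦ by
      rw [setOf_lt_cauchyPDFReal_eq_ball x hγ hs]
  have hmeas : Measurable fun s : ℝ ↦ volume (ball x √(π⁻¹ * γ / s - γ ^ 2)) := by
    simp only [Real.volume_ball]
    fun_prop
  calc ∫⁻ t, cauchyPDF x γ t ∂μ
      ≤ ∫⁻ s in Ioi (0 : ℝ), D * volume (ball x √(π⁻¹ * γ / s - γ ^ 2)) := by
        rw [layer_cake]
        exact lintegral_mono fun s ↦ hD _
    _ = D * ∫⁻ t, cauchyPDF x γ t := by rw [lintegral_const_mul _ hmeas, ← layer_cake]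
    _ = D := by rw [lintegral_cauchyPDF_eq_one x hγ, mul_one]

lemma setLIntegral_cauchyPDF_le_of_measure_closedBall_le {μ : Measure ℝ} {D : ℝ≥0∞} {R : ℝ}
    (hD : ∀ r ∈ Ioc 0 R, μ (closedBall x r) ≤ D * volume (closedBall x r))
    {γ : ℝ≥0} (hγ : γ ≠ 0) :
    ∫⁻ t in ball x R, cauchyPDF x γ t ∂μ ≤ D := by
  refine lintegral_cauchyPDF_le_of_measure_ball_le (fun r ↦ ?_) hγ
  rw [Measure.restrict_apply measurableSet_ball]
  rcases le_or_gt (min r R) 0 with hle | hlt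
  · rcases min_le_iff.1 hle with h | h <;> simp [ball_eq_empty.2 h]
  · calc μ (ball x r ∩ ball x R)
        ≤ μ (closedBall x (min r R)) := by
          refine measure_mono fun t ht ↦ ?_
          exact le_min (mem_ball.1 ht.1).le (mem_ball.1 ht.2).le
      _ ≤ D * volume (closedBall x (min r R)) := hD _ ⟨hlt, min_le_right r R⟩
      _ ≤ D * volume (ball x r) := by
          rw [Real.volume_closedBall, Real.volume_ball]
          gcongr
          exact min_le_left r R

lemma setLIntegral_compl_ball_cauchyPDF_le (μ : Measure ℝ) {γ r : ℝ≥0} (hr : r ≠ 0) :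
    ∫⁻ t in (ball x r)ᶜ, cauchyPDF x γ t ∂μ ≤
      ENNReal.ofReal (2 * γ / r) * ∫⁻ t, cauchyPDF x r t ∂μ := by
  rw [← lintegral_const_mul _ (measurable_cauchyPDF x r)]
  refine (setLIntegral_mono' measurableSet_ball.compl fun t ht ↦ ?_).trans
    (setLIntegral_le_lintegral _ _)
  rw [cauchyPDF, cauchyPDF, ← ENNReal.ofReal_mul (by positivity)]
  gcongr
  exact cauchyPDFReal_le_of_le_abs_sub hr (by simpa [Real.dist_eq] using ht)

lemma tendsto_lintegral_cauchyPDF_of_tendsto_measure_closedBall_div {μ : Measure ℝ}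
    (hμ : Tendsto (fun r ↦ μ (closedBall x r) / volume (closedBall x r)) (𝓝[>] 0) (𝓝 0))
    (hfin : ∀ γ : ℝ≥0, γ ≠ 0 → ∫⁻ t, cauchyPDF x γ t ∂μ ≠ ∞) :
    Tendsto (fun y : ℝ ↦ ∫⁻ t, cauchyPDF x y.toNNReal t ∂μ) (𝓝[>] 0) (𝓝 0) := by
  rw [ENNReal.tendsto_nhds_zero] at hμ ⊢
  intro ε hε
  obtain ⟨R, hR, hball⟩ := mem_nhdsGT_iff_exists_Ioc_subset.1
    (hμ (ε / 2) (ENNReal.half_pos hε.ne'))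
  have hR' : R.toNNReal ≠ 0 := (Real.toNNReal_pos.2 hR).ne'
  have hD (r : ℝ) (hr : r ∈ Ioc 0 R) :
      μ (closedBall x r) ≤ ε / 2 * volume (closedBall x r) := by
    rw [← ENNReal.div_le_iff (by simpa using hr.1) measure_closedBall_lt_top.ne]
    exact hball hr
  have hfar : Tendsto (fun y : ℝ ↦ ENNReal.ofReal (2 * y.toNNReal / R.toNNReal) *
      ∫⁻ t, cauchyPDF x R.toNNReal t ∂μ) (𝓝[>] 0) (𝓝 0) := by
    have hcont : Continuous fun y : ℝ ↦ ENNReal.ofReal (2 * y.toNNReal / R.toNNReal) :=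
      ENNReal.continuous_ofReal.comp (by fun_prop)
    have := ENNReal.Tendsto.mul_const (hcont.tendsto 0) (.inr (hfin _ hR'))
    simpa using this.mono_left nhdsWithin_le_nhds
  filter_upwards [ENNReal.tendsto_nhds_zero.1 hfar (ε / 2) (ENNReal.half_pos hε.ne'),
    self_mem_nhdsWithin] with y hy hy₀
  rw [← lintegral_add_compl _ (measurableSet_ball (x := x) (ε := R.toNNReal)),
    ← ENNReal.add_halves ε, Real.coe_toNNReal R (mem_Ioi.1 hR).le]
  refine add_le_add (setLIntegral_cauchyPDF_le_of_measure_closedBall_le hD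
    (Real.toNNReal_pos.2 hy₀).ne') ?_
  have := (setLIntegral_compl_ball_cauchyPDF_le (x := x) μ hR').trans hy
  rwa [Real.coe_toNNReal R (mem_Ioi.1 hR).le] at this

theorem ae_tendsto_lintegral_enorm_sub_cauchyMeasure {f : ℝ → E} {x₀ : ℝ} {γ₀ : ℝ≥0}
    (hγ₀ : γ₀ ≠ 0) (hf : Integrable f (cauchyMeasure x₀ γ₀)) :
    ∀ᵐ x, Tendsto (fun y : ℝ ↦ ∫⁻ t, ‖f t - f x‖ₑ ∂cauchyMeasure x y.toNNReal)
      (𝓝[>] 0) (𝓝 0) := by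
  have hloc := locallyIntegrable_of_integrable_cauchyMeasure hγ₀ hf
  filter_upwards [(Besicovitch.vitaliFamily volume).ae_tendsto_lintegral_enorm_sub_div hloc]
    with x hx
  have hsub : AEMeasurable (fun t ↦ ‖f t - f x‖ₑ) volume :=
    (hloc.aestronglyMeasurable.sub aestronglyMeasurable_const).enorm
  have hdensity (γ : ℝ≥0) (hγ : γ ≠ 0) : ∫⁻ t, ‖f t - f x‖ₑ ∂cauchyMeasure x γ =
      ∫⁻ t, cauchyPDF x γ t ∂volume.withDensity fun t ↦ ‖f t - f x‖ₑ := by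
    rw [lintegral_cauchyMeasure x hγ, lintegral_withDensity_eq_lintegral_mul₀ hsub
      (measurable_cauchyPDF x γ).aemeasurable]
    simp only [Pi.mul_apply, mul_comm]
  have hlim : Tendsto (fun y : ℝ ↦ ∫⁻ t, cauchyPDF x y.toNNReal t
      ∂volume.withDensity fun t ↦ ‖f t - f x‖ₑ) (𝓝[>] 0) (𝓝 0) := by
    refine tendsto_lintegral_cauchyPDF_of_tendsto_measure_closedBall_div ?_ fun γ hγ ↦ ?_
    · simpa only [withDensity_apply _ measurableSet_closedBall, Function.comp_def]
        using hx.comp (Besicovitch.tendsto_filterAt volume x)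
    · rw [← hdensity γ hγ]
      exact (((integrable_cauchyMeasure_congr x₀ x hγ₀ hγ).1 hf).sub
        (integrable_const (f x))).2.ne
  refine hlim.congr' ?_
  filter_upwards [self_mem_nhdsWithin] with y hy
  exact (hdensity _ (Real.toNNReal_pos.2 hy).ne').symm

theorem ae_tendsto_integral_cauchyMeasure [CompleteSpace E] {f : ℝ → E}
    {x₀ : ℝ} {γ₀ : ℝ≥0} (hγ₀ : γ₀ ≠ 0) (hf : Integrable f (cauchyMeasure x₀ γ₀)) :
    ∀ᵐ x, Tendsto (fun y : ℝ ↦ ∫ t, f t ∂cauchyMeasure x y.toNNReal) (𝓝[>] 0) (𝓝 (f x)) := by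
  filter_upwards [ae_tendsto_lintegral_enorm_sub_cauchyMeasure hγ₀ hf] with x hx
  rw [tendsto_iff_enorm_sub_tendsto_zero]
  refine tendsto_of_tendsto_of_tendsto_of_le_of_le' tendsto_const_nhds hx
    (.of_forall fun _ ↦ zero_le) ?_
  filter_upwards [self_mem_nhdsWithin] with y hy
  have hfy := (integrable_cauchyMeasure_congr x₀ x hγ₀ (Real.toNNReal_pos.2 hy).ne').1 hf
  calc ‖∫ t, f t ∂cauchyMeasure x y.toNNReal - f x‖ₑ
      = ‖∫ t, (f t - f x) ∂cauchyMeasure x y.toNNReal‖ₑ := by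
        rw [integral_sub hfy (integrable_const _), integral_const, probReal_univ, one_smul]
    _ ≤ _ := enorm_integral_le_lintegral_enorm _

end LebesguePoint

section PoissonFormula

variable {E : Type*} [NormedAddCommGroup E] [NormedSpace ℂ E] {Ψ : ℂ → E} {M : ℝ}

lemma isOpen_setOf_im_pos : IsOpen {z : ℂ | 0 < z.im} :=
  isOpen_lt continuous_const Complex.continuous_im

lemma continuous_comp_add_mul_I {E : Type*} [TopologicalSpace E] {Ψ : ℂ → E}
    (hΨ : ContinuousOn Ψ {z | 0 < z.im}) {η : ℝ} (hη : 0 < η) :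
    Continuous fun t : ℝ ↦ Ψ (t + η * I) :=
  hΨ.comp_continuous (by fun_prop) fun t ↦ by simpa using hη

lemma exp_two_mul_arctan_mul_I (t : ℝ) :
    Complex.exp (2 * Real.arctan t * I) = (1 + t * I) / (1 - t * I) := by
  have hsq : (1 + (t : ℂ) ^ 2) ≠ 0 := by exact_mod_cast (by positivity : (1 + t ^ 2 : ℝ) ≠ 0)
  have hfactor : (1 + (t : ℂ) ^ 2) = (1 + t * I) * (1 - t * I) := by
    linear_combination (t : ℂ) ^ 2 * Complex.I_sq
  have hpolar : (Real.cos (Real.arctan t) : ℂ) + Real.sin (Real.arctan t) * I =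
      Real.cos (Real.arctan t) * (1 + t * I) := by
    rw [Real.sin_arctan, Real.cos_arctan]
    push_cast
    ring
  have hcos : (Real.cos (Real.arctan t) : ℂ) ^ 2 = 1 / (1 + (t : ℂ) ^ 2) := by
    exact_mod_cast Real.cos_sq_arctan t
  rw [hfactor] at hsq hcos
  rw [mul_assoc, two_mul, Complex.exp_add, Complex.exp_mul_I, ← Complex.ofReal_cos,
    ← Complex.ofReal_sin, hpolar, mul_mul_mul_comm, ← sq, hcos]
  field_simp [left_ne_zero_of_mul hsq, right_ne_zero_of_mul hsq]

lemma image_univ_two_mul_arctan : (fun t ↦ 2 * Real.arctan t) '' univ = Ioo (-π) π := by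
  rw [image_univ, ← Function.comp_def (2 * ·) Real.arctan, range_comp, Real.range_arctan,
    image_mul_left_Ioo two_pos]
  congr 1 <;> ring

-- The substitution `θ = 2 arctan t` carries the uniform measure of the circle to the Cauchy law.
theorem circleAverage_eq_integral_cauchyMeasure (f : ℂ → E) (c : ℂ) (R : ℝ) :
    Real.circleAverage f c R =
      ∫ t : ℝ, f (c + R * ((1 + t * I) / (1 - t * I))) ∂cauchyMeasure 0 1 := by
  have hderiv (t : ℝ) (_ : t ∈ univ) :
      HasDerivWithinAt (fun t ↦ 2 * Real.arctan t) (2 * (1 / (1 + t ^ 2))) univ t :=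
    ((Real.hasDerivAt_arctan t).const_mul 2).hasDerivWithinAt
  have hinj : InjOn (fun t ↦ 2 * Real.arctan t) univ :=
    ((mul_right_injective₀ two_ne_zero).comp Real.arctan_injective).injOn
  rw [Real.circleAverage_eq_integral_add (-π),
    intervalIntegral.integral_comp_add_right fun θ ↦ f (circleMap c R θ), zero_add,
    show 2 * π + -π = π by ring, intervalIntegral.integral_of_le (by linarith [Real.pi_pos]),
    integral_Ioc_eq_integral_Ioo, ← image_univ_two_mul_arctan,
    integral_image_eq_integral_abs_deriv_smul .univ hderiv hinj, ← integral_smul, setIntegral_univ,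
    integral_cauchyMeasure 0 one_ne_zero]
  refine integral_congr_ae (.of_forall fun t ↦ ?_)
  simp only [smul_smul, circleMap, Complex.ofReal_mul, Complex.ofReal_ofNat,
    exp_two_mul_arctan_mul_I]
  congr 1
  rw [abs_of_pos (by positivity), cauchyPDFReal_def]
  simp only [mul_inv_rev, one_div, NNReal.coe_one, mul_one, sub_zero, one_pow]
  field_simp
  ring

/-- The Cayley transform, mapping the unit disc onto the upper half-plane and its centre to `I`. -/
def cayleyTransform (w : ℂ) : ℂ := I * ((1 - w) / (1 + w))

lemma cayleyTransform_zero : cayleyTransform 0 = I := by simp [cayleyTransform]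

lemma cayleyTransform_im (w : ℂ) :
    (cayleyTransform w).im = (1 - ‖w‖ ^ 2) / ‖1 + w‖ ^ 2 := by
  rw [cayleyTransform, Complex.I_mul_im, Complex.div_re, ← add_div, ← Complex.normSq_eq_norm_sq,
    ← Complex.normSq_eq_norm_sq]
  congr 1
  simp only [Complex.sub_re, Complex.one_re, Complex.add_re, Complex.sub_im, Complex.one_im,
    zero_sub, Complex.add_im, zero_add, neg_mul, Complex.normSq_apply]
  ring

lemma one_add_ne_zero_of_norm_lt_one {w : ℂ} (hw : ‖w‖ < 1) : 1 + w ≠ 0 := by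
  intro h
  rw [eq_neg_of_add_eq_zero_right h, norm_neg, norm_one] at hw
  exact lt_irrefl _ hw

lemma cayleyTransform_im_pos {w : ℂ} (hw : ‖w‖ < 1) : 0 < (cayleyTransform w).im := by
  rw [cayleyTransform_im]
  have := norm_pos_iff.2 (one_add_ne_zero_of_norm_lt_one hw)
  have : ‖w‖ ^ 2 < 1 := pow_lt_one₀ (norm_nonneg w) hw two_ne_zero
  exact div_pos (by linarith) (by positivity)

lemma differentiableAt_cayleyTransform {w : ℂ} (hw : 1 + w ≠ 0) :
    DifferentiableAt ℂ cayleyTransform w :=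
  (DifferentiableAt.div (by fun_prop) (by fun_prop) hw).const_mul I

lemma one_sub_ofReal_mul_I_ne_zero (t : ℝ) : 1 - t * I ≠ 0 := fun h ↦ by
  simpa using congrArg Complex.re h

lemma norm_one_add_mul_I_div_one_sub_mul_I (t : ℝ) : ‖(1 + t * I) / (1 - t * I)‖ = 1 := by
  rw [← exp_two_mul_arctan_mul_I]
  exact_mod_cast Complex.norm_exp_ofReal_mul_I (2 * Real.arctan t)

lemma one_add_one_add_mul_I_div_ne_zero (t : ℝ) : 1 + (1 + t * I) / (1 - t * I) ≠ 0 := by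
  rw [one_add_div (one_sub_ofReal_mul_I_ne_zero t), sub_add_add_cancel]
  exact div_ne_zero (by norm_num) (one_sub_ofReal_mul_I_ne_zero t)

lemma cayleyTransform_one_add_mul_I_div (t : ℝ) :
    cayleyTransform ((1 + t * I) / (1 - t * I)) = t := by
  have := one_sub_ofReal_mul_I_ne_zero t
  rw [cayleyTransform, one_add_div this, one_sub_div this, div_div_div_cancel_right₀ this]
  linear_combination -(t : ℂ) * Complex.I_sq

lemma norm_ofReal_mul_one_add_mul_I_div_lt_one {r : ℝ} (hr : r ∈ Ico (0 : ℝ) 1) (t : ℝ) :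
    ‖r * ((1 + t * I) / (1 - t * I))‖ < 1 := by
  rw [norm_mul, norm_one_add_mul_I_div_one_sub_mul_I, mul_one, Complex.norm_real,
    Real.norm_of_nonneg hr.1]
  exact hr.2

lemma continuous_cayleyTransform_circle {r : ℝ} (hr : r ∈ Ico (0 : ℝ) 1) :
    Continuous fun t : ℝ ↦ cayleyTransform (r * ((1 + t * I) / (1 - t * I))) := by
  have hcircle : Continuous fun t : ℝ ↦ (r : ℂ) * ((1 + t * I) / (1 - t * I)) :=
    continuous_const.mul (Continuous.div (by fun_prop) (by fun_prop) one_sub_ofReal_mul_I_ne_zero)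
  refine continuous_iff_continuousAt.2 fun t ↦ ContinuousAt.comp (g := cayleyTransform)
    (differentiableAt_cayleyTransform ?_).continuousAt hcircle.continuousAt
  exact one_add_ne_zero_of_norm_lt_one (norm_ofReal_mul_one_add_mul_I_div_lt_one hr t)

variable [CompleteSpace E]

lemma integral_comp_cayleyTransform_cauchyMeasure (hΨ : DifferentiableOn ℂ Ψ {z | 0 < z.im})
    {r : ℝ} (hr : r ∈ Ico (0 : ℝ) 1) :
    ∫ t : ℝ, Ψ (cayleyTransform (r * ((1 + t * I) / (1 - t * I)))) ∂cauchyMeasure 0 1 = Ψ I := by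
  have hdiff : DifferentiableOn ℂ (Ψ ∘ cayleyTransform) (closedBall 0 r) := fun w hw ↦ by
    have hw' : ‖w‖ < 1 := (mem_closedBall_zero_iff.1 hw).trans_lt hr.2
    have := hΨ.differentiableAt (isOpen_setOf_im_pos.mem_nhds (cayleyTransform_im_pos hw'))
    exact (this.comp w <| differentiableAt_cayleyTransform
      (one_add_ne_zero_of_norm_lt_one hw')).differentiableWithinAt
  have := (hdiff.mono closure_ball_subset_closedBall).diffContOnCl
  rw [← abs_of_nonneg hr.1] at this
  simpa [circleAverage_eq_integral_cauchyMeasure, cayleyTransform_zero] using this.circleAverage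

lemma integral_cauchyMeasure_zero_one_of_diffContOnCl (hΨ : DiffContOnCl ℂ Ψ {z | 0 < z.im})
    (hM : ∀ z : ℂ, 0 < z.im → ‖Ψ z‖ ≤ M) : ∫ t : ℝ, Ψ t ∂cauchyMeasure 0 1 = Ψ I := by
  have hmem {r : ℝ} (hr : r ∈ Ioo (0 : ℝ) 1) (t : ℝ) :
      0 < (cayleyTransform (r * ((1 + t * I) / (1 - t * I)))).im := by
    refine cayleyTransform_im_pos ?_
    exact norm_ofReal_mul_one_add_mul_I_div_lt_one ⟨hr.1.le, hr.2⟩ t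
  have hev : ∀ᶠ r : ℝ in 𝓝[<] 1, r ∈ Ioo (0 : ℝ) 1 := Ioo_mem_nhdsLT one_pos
  have hcay (t : ℝ) : Tendsto (fun r : ℝ ↦ cayleyTransform (r * ((1 + t * I) / (1 - t * I))))
      (𝓝[<] 1) (𝓝[{z | 0 < z.im}] t) := by
    refine tendsto_nhdsWithin_iff.2 ⟨?_, hev.mono fun r hr ↦ hmem hr t⟩
    have hcont : Continuous fun r : ℝ ↦ (r : ℂ) * ((1 + t * I) / (1 - t * I)) := by fun_prop
    have := (differentiableAt_cayleyTransform
      (one_add_one_add_mul_I_div_ne_zero t)).continuousAt.tendsto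
    rw [cayleyTransform_one_add_mul_I_div] at this
    refine this.comp ((hcont.tendsto' 1 _ ?_).mono_left nhdsWithin_le_nhds)
    simp
  have hlim : Tendsto (fun r : ℝ ↦
      ∫ t : ℝ, Ψ (cayleyTransform (r * ((1 + t * I) / (1 - t * I)))) ∂cauchyMeasure 0 1)
      (𝓝[<] 1) (𝓝 (∫ t : ℝ, Ψ t ∂cauchyMeasure 0 1)) := by
    refine tendsto_integral_filter_of_dominated_convergence (fun _ ↦ M) ?_ ?_
      (integrable_const M) (.of_forall fun t ↦ ?_)
    · filter_upwards [hev] with r hr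
      exact (hΨ.differentiableOn.continuousOn.comp_continuous
        (continuous_cayleyTransform_circle ⟨hr.1.le, hr.2⟩) (hmem hr)).aestronglyMeasurable
    · exact hev.mono fun r hr ↦ .of_forall fun t ↦ hM _ (hmem hr t)
    · refine ((hΨ.continuousOn t ?_).mono subset_closure).tendsto.comp (hcay t)
      simp
  refine tendsto_nhds_unique hlim (tendsto_const_nhds.congr' ?_)
  filter_upwards [hev] with r hr
  exact (integral_comp_cayleyTransform_cauchyMeasure hΨ.differentiableOn ⟨hr.1.le, hr.2⟩).symm

theorem integral_cauchyMeasure_of_diffContOnCl (hΨ : DiffContOnCl ℂ Ψ {z | 0 < z.im})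
    (hM : ∀ z : ℂ, 0 < z.im → ‖Ψ z‖ ≤ M) {z : ℂ} (hz : 0 < z.im) :
    ∫ t : ℝ, Ψ t ∂cauchyMeasure z.re z.im.toNNReal = Ψ z := by
  have him (w : ℂ) (hw : 0 < w.im) : 0 < (z.re + z.im * w : ℂ).im := by simpa using mul_pos hz hw
  have hmap : MapsTo (fun w : ℂ ↦ z.re + z.im * w) {w | 0 < w.im} {w | 0 < w.im} := him
  have haffine : DiffContOnCl ℂ (fun w : ℂ ↦ Ψ (z.re + z.im * w)) {w | 0 < w.im} :=
    hΨ.comp (Differentiable.diffContOnCl (by fun_prop)) hmap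
  rw [integral_cauchyMeasure_eq_integral_zero_one _ (Real.toNNReal_pos.2 hz).ne',
    Real.coe_toNNReal _ hz.le]
  simpa [Complex.re_add_im] using
    integral_cauchyMeasure_zero_one_of_diffContOnCl haffine fun w hw ↦ hM _ (him w hw)

theorem integral_cauchyMeasure_shift {η : ℝ} (hη : 0 < η)
    (hΨ : DifferentiableOn ℂ Ψ {z | 0 < z.im}) (hM : ∀ z : ℂ, η ≤ z.im → ‖Ψ z‖ ≤ M)
    {z : ℂ} (hz : 0 < z.im) :
    ∫ t : ℝ, Ψ (t + η * I) ∂cauchyMeasure z.re z.im.toNNReal = Ψ (z + η * I) := by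
  have hshift : DifferentiableOn ℂ (fun w : ℂ ↦ Ψ (w + η * I)) (closure {z | 0 < z.im}) := by
    refine hΨ.comp (by fun_prop) fun w hw ↦ ?_
    rw [Complex.closure_setOfPred_lt_im, mem_ofPred_eq] at hw
    simpa using by linarith
  refine integral_cauchyMeasure_of_diffContOnCl hshift.diffContOnCl (fun w hw ↦ hM _ ?_) hz
  simpa using hw.le

end PoissonFormula

section FatouTheorem

lemma integral_cauchyMeasure_eq_integral_div_smul {E : Type*} [NormedAddCommGroup E]
    [NormedSpace ℝ E] (x x' : ℝ) {γ γ' : ℝ≥0} (hγ : γ ≠ 0) (hγ' : γ' ≠ 0) (f : ℝ → E) :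
    ∫ t, f t ∂cauchyMeasure x γ =
      ∫ t, (cauchyPDFReal x γ t / cauchyPDFReal x' γ' t) • f t ∂cauchyMeasure x' γ' := by
  rw [integral_cauchyMeasure x hγ, integral_cauchyMeasure x' hγ']
  refine integral_congr_ae (.of_forall fun t ↦ ?_)
  simp only [smul_smul, mul_div_cancel₀ _ (cauchyPDF_pos x' hγ' t).ne']

lemma memLp_cauchyPDFReal_div (x x' : ℝ) {γ γ' : ℝ≥0} (hγ : γ ≠ 0) (hγ' : γ' ≠ 0) (p : ℝ≥0∞) :
    MemLp (fun t ↦ ((cauchyPDFReal x γ t / cauchyPDFReal x' γ' t : ℝ) : ℂ)) p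
      (cauchyMeasure x' γ') := by
  have hcont : Continuous fun t ↦ cauchyPDFReal x γ t / cauchyPDFReal x' γ' t :=
    (continuous_cauchyPDFReal x γ).div₀ (continuous_cauchyPDFReal x' γ')
      fun t ↦ (cauchyPDF_pos x' hγ' t).ne'
  refine .of_bound (Complex.continuous_ofReal.comp hcont).aestronglyMeasurable
    (γ / γ' * (2 + (2 * (x - x') ^ 2 + γ' ^ 2) / γ ^ 2)) (.of_forall fun t ↦ ?_)
  rw [Complex.norm_real, Real.norm_of_nonneg
    (div_nonneg (cauchyPDFReal_nonneg x γ t) (cauchyPDFReal_nonneg x' γ' t)),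
    div_le_iff₀ (cauchyPDF_pos x' hγ' t)]
  exact cauchyPDFReal_le_const_mul x x' hγ hγ' t

section WeakCompactness

variable {𝕜 ι : Type*} [RCLike 𝕜] {l : Filter ι} [l.NeBot]

lemma exists_ultrafilter_tendsto_inner {H : Type*} [NormedAddCommGroup H]
    [InnerProductSpace 𝕜 H] [CompleteSpace H] {u : ι → H} {M : ℝ} (hu : ∀ᶠ i in l, ‖u i‖ ≤ M) :
    ∃ U : Ultrafilter ι, ↑U ≤ l ∧
      ∃ g : H, ∀ h, Tendsto (fun i ↦ inner 𝕜 h (u i)) U (𝓝 (inner 𝕜 h g)) := by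
  let φ (i : ι) : WeakDual 𝕜 H := StrongDual.toWeakDual (InnerProductSpace.toDual 𝕜 H (u i))
  have hU : ↑(Ultrafilter.of l) ≤ l := Ultrafilter.of_le l
  have hball : ∀ᶠ i in (Ultrafilter.of l : Filter ι),
      φ i ∈ WeakDual.toStrongDual ⁻¹' closedBall (0 : StrongDual 𝕜 H) M :=
    (hu.filter_mono hU).mono fun i hi ↦ by simpa [φ] using hi
  obtain ⟨ψ, -, hψ⟩ := (WeakDual.isCompact_closedBall (0 : StrongDual 𝕜 H) M).ultrafilter_le_nhds
    ((Ultrafilter.of l).map φ) (le_principal_iff.2 hball)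
  obtain ⟨g, hg⟩ := (InnerProductSpace.toDual 𝕜 H).surjective (WeakDual.toStrongDual ψ)
  refine ⟨Ultrafilter.of l, hU, g, fun h ↦ ?_⟩
  have hlim : Tendsto (fun i ↦ inner 𝕜 (u i) h) (Ultrafilter.of l) (𝓝 (inner 𝕜 g h)) := by
    rw [← InnerProductSpace.toDual_apply_apply, hg]
    exact ((WeakDual.eval_continuous h).tendsto ψ).comp hψ
  simpa only [Function.comp_def, inner_conj_symm] using (RCLike.continuous_conj.tendsto _).comp hlim

lemma exists_memLp_two_tendsto_integral_inner {α E : Type*} [MeasurableSpace α]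
    {μ : Measure α} [NormedAddCommGroup E] [InnerProductSpace 𝕜 E] [CompleteSpace E]
    {u : ι → α → E} {C : ℝ≥0} (hu : ∀ᶠ i in l, MemLp (u i) 2 μ ∧ eLpNorm (u i) 2 μ ≤ C) :
    ∃ U : Ultrafilter ι, ↑U ≤ l ∧ ∃ g : α → E, MemLp g 2 μ ∧ ∀ h : α → E, MemLp h 2 μ →
      Tendsto (fun i ↦ ∫ a, inner 𝕜 (h a) (u i a) ∂μ) U (𝓝 (∫ a, inner 𝕜 (h a) (g a) ∂μ)) := by
  classical
  have inner_toLp {h v : α → E} (hh : MemLp h 2 μ) (hv : MemLp v 2 μ) :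
      inner 𝕜 (hh.toLp h) (hv.toLp v) = ∫ a, inner 𝕜 (h a) (v a) ∂μ := by
    rw [L2.inner_def]
    refine integral_congr_ae ?_
    filter_upwards [hh.coeFn_toLp, hv.coeFn_toLp] with a ha ha'
    rw [ha, ha']
  obtain ⟨U, hU, g, hg⟩ := exists_ultrafilter_tendsto_inner (𝕜 := 𝕜) (l := l) (M := C)
    (u := fun i ↦ if hi : MemLp (u i) 2 μ then hi.toLp (u i) else 0) <| hu.mono fun i hi ↦ by
      rw [dif_pos hi.1, Lp.norm_toLp]
      exact ENNReal.toReal_mono ENNReal.coe_ne_top hi.2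
  refine ⟨U, hU, g, Lp.memLp g, fun h hh ↦ ?_⟩
  have hlim := hg (hh.toLp h)
  rw [← Lp.toLp_coeFn g (Lp.memLp g), inner_toLp] at hlim
  refine hlim.congr' ((hu.filter_mono hU).mono fun i hi ↦ ?_)
  simp only [dif_pos hi.1, inner_toLp]

end WeakCompactness

variable {Φ : ℂ → ℂ} {M : ℝ}

lemma memLp_comp_add_mul_I (hΦ : DifferentiableOn ℂ Φ {z | 0 < z.im})
    (hM : ∀ z : ℂ, 0 < z.im → ‖Φ z‖ ≤ M) {η : ℝ} (hη : 0 < η) (p : ℝ≥0∞) :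
    MemLp (fun t : ℝ ↦ Φ (t + η * I)) p (cauchyMeasure 0 1) :=
  .of_bound (continuous_comp_add_mul_I hΦ.continuousOn hη).aestronglyMeasurable M
    (.of_forall fun t ↦ hM _ (by simpa using hη))

-- `g` is a weak `L²` limit of the traces of `Φ` on the horizontal lines `im z = η`, `η → 0`.
theorem exists_integrable_integral_cauchyMeasure_eq (hΦ : DifferentiableOn ℂ Φ {z | 0 < z.im})
    (hM : ∀ z : ℂ, 0 < z.im → ‖Φ z‖ ≤ M) :
    ∃ g : ℝ → ℂ, Integrable g (cauchyMeasure 0 1) ∧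
      ∀ z : ℂ, 0 < z.im → ∫ t, g t ∂cauchyMeasure z.re z.im.toNNReal = Φ z := by
  have hpos : ∀ᶠ η : ℝ in 𝓝[>] 0, 0 < η := self_mem_nhdsWithin
  obtain ⟨U, hU, g, hg, hlim⟩ := exists_memLp_two_tendsto_integral_inner (𝕜 := ℂ)
    (l := 𝓝[>] (0 : ℝ)) (u := fun η t ↦ Φ (t + η * I)) (μ := cauchyMeasure 0 1)
    (C := M.toNNReal) <| hpos.mono fun η hη ↦ ⟨memLp_comp_add_mul_I hΦ hM hη 2,
      (eLpNorm_le_of_ae_bound (.of_forall fun t : ℝ ↦ hM (t + η * I) (by simpa using hη))).trans_eq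
        (by simp [ENNReal.ofReal])⟩
  refine ⟨g, hg.integrable one_le_two, fun z hz ↦ ?_⟩
  have hz' := (Real.toNNReal_pos.2 hz).ne'
  have hcauchy := hlim _ (memLp_cauchyPDFReal_div z.re 0 hz' one_ne_zero 2)
  simp only [RCLike.inner_apply, Complex.conj_ofReal, mul_comm _ (Complex.ofReal _),
    ← Complex.real_smul, ← integral_cauchyMeasure_eq_integral_div_smul z.re 0 hz' one_ne_zero]
    at hcauchy
  refine tendsto_nhds_unique hcauchy (Tendsto.congr' (f₁ := fun η : ℝ ↦ Φ (z + η * I)) ?_ ?_)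
  · filter_upwards [hU self_mem_nhdsWithin] with η hη
    exact (integral_cauchyMeasure_shift hη hΦ (fun w hw ↦ hM w (hη.trans_le hw)) hz).symm
  · have hcont : Continuous fun η : ℝ ↦ z + η * I := by fun_prop
    refine Tendsto.mono_left ?_ (hU.trans nhdsWithin_le_nhds)
    exact (hΦ.continuousOn.continuousAt (isOpen_setOf_im_pos.mem_nhds hz)).tendsto.comp
      (hcont.tendsto' 0 z (by simp))

theorem ae_exists_tendsto_of_norm_le (hΦ : DifferentiableOn ℂ Φ {z | 0 < z.im})
    (hM : ∀ z : ℂ, 0 < z.im → ‖Φ z‖ ≤ M) :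
    ∀ᵐ x : ℝ, ∃ c, Tendsto (fun y : ℝ ↦ Φ (x + y * I)) (𝓝[>] 0) (𝓝 c) := by
  obtain ⟨g, hg, hrepr⟩ := exists_integrable_integral_cauchyMeasure_eq hΦ hM
  filter_upwards [ae_tendsto_integral_cauchyMeasure one_ne_zero hg] with x hx
  refine ⟨g x, hx.congr' ?_⟩
  filter_upwards [self_mem_nhdsWithin] with y hy
  simpa using hrepr (x + y * I) (by simpa using hy)

end FatouTheorem

section PositiveRealPart

variable {G : ℂ → ℂ}

lemma ae_liminf_lt_top {α : Type*} [MeasurableSpace α] {μ : Measure α} {f : ℕ → α → ℝ≥0∞}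
    {C : ℝ≥0∞} (hf : ∀ n, Measurable (f n)) (hC : C ≠ ∞) (h : ∀ n, ∫⁻ a, f n a ∂μ ≤ C) :
    ∀ᵐ a ∂μ, liminf (fun n ↦ f n a) atTop < ∞ := by
  refine ae_lt_top (.liminf hf) (ne_top_of_le_ne_top hC ?_)
  exact (lintegral_liminf_le hf).trans ((liminf_le_liminf (.of_forall h)).trans_eq (by simp))

lemma one_le_norm_of_one_le_re {w : ℂ} (hw : 1 ≤ w.re) : 1 ≤ ‖w‖ :=
  hw.trans (Complex.re_le_norm w)

lemma norm_log_le_of_one_le_norm {w : ℂ} {M : ℝ} (hw : 1 ≤ ‖w‖) (hM : ‖w‖ ≤ M) :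
    ‖Complex.log w‖ ≤ M + π := by
  refine (Complex.norm_le_abs_re_add_abs_im _).trans (add_le_add ?_ ?_)
  · rw [Complex.log_re, abs_of_nonneg (Real.log_nonneg hw)]
    exact (Real.log_le_self (norm_nonneg w)).trans hM
  · rw [Complex.log_im]
    exact Complex.abs_arg_le_pi w

lemma differentiableOn_log_comp (hG : DifferentiableOn ℂ G {z | 0 < z.im})
    (hre : ∀ z : ℂ, 0 < z.im → 1 ≤ (G z).re) :
    DifferentiableOn ℂ (fun z ↦ Complex.log (G z)) {z | 0 < z.im} :=
  hG.clog fun z hz ↦ .inl (one_pos.trans_le (hre z hz))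

lemma integral_log_norm_cauchyMeasure (hG : DifferentiableOn ℂ G {z | 0 < z.im})
    (hre : ∀ z : ℂ, 0 < z.im → 1 ≤ (G z).re) {η M : ℝ} (hη : 0 < η)
    (hM : ∀ z : ℂ, η ≤ z.im → ‖G z‖ ≤ M) {z : ℂ} (hz : 0 < z.im) :
    ∫ t : ℝ, Real.log ‖G (t + η * I)‖ ∂cauchyMeasure z.re z.im.toNNReal =
      Real.log ‖G (z + η * I)‖ := by
  have hlog := differentiableOn_log_comp hG hre
  have hbound (w : ℂ) (hw : η ≤ w.im) : ‖Complex.log (G w)‖ ≤ M + π :=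
    norm_log_le_of_one_le_norm (one_le_norm_of_one_le_re (hre w (hη.trans_le hw))) (hM w hw)
  have hcont : Continuous fun t : ℝ ↦ Complex.log (G (t + η * I)) :=
    continuous_comp_add_mul_I hlog.continuousOn hη
  have hInt : Integrable (fun t : ℝ ↦ Complex.log (G (t + η * I)))
      (cauchyMeasure z.re z.im.toNNReal) :=
    .of_bound hcont.aestronglyMeasurable (M + π) (.of_forall fun t ↦ hbound _ (by simp))
  simp only [← Complex.log_re]
  rw [← integral_cauchyMeasure_shift hη hlog hbound hz]
  exact integral_re hInt

-- `log ‖G‖` is a nonnegative harmonic function, so its integrals over the lines `im z = η` stay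
-- bounded as `η → 0`.
lemma ae_liminf_log_norm_lt_top (hG : DifferentiableOn ℂ G {z | 0 < z.im})
    (hre : ∀ z : ℂ, 0 < z.im → 1 ≤ (G z).re)
    (hbdd : ∀ η > 0, ∃ M, ∀ z : ℂ, η ≤ z.im → ‖G z‖ ≤ M) {η : ℕ → ℝ} (hη : ∀ n, 0 < η n) :
    ∀ᵐ t : ℝ, liminf (fun n ↦ ENNReal.ofReal (Real.log ‖G (t + η n * I)‖)) atTop < ∞ := by
  obtain ⟨M, hM⟩ := hbdd 1 one_pos
  have hlog (n : ℕ) (t : ℝ) : 0 ≤ Real.log ‖G (t + η n * I)‖ :=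
    Real.log_nonneg (one_le_norm_of_one_le_re (hre _ (by simpa using hη n)))
  have hcont (n : ℕ) : Continuous fun t : ℝ ↦ Real.log ‖G (t + η n * I)‖ :=
    (continuous_comp_add_mul_I hG.continuousOn (hη n)).norm.log fun t ↦
      (one_pos.trans_le (one_le_norm_of_one_le_re (hre _ (by simpa using hη n)))).ne'
  refine (absolutelyContinuous_cauchyMeasure 0 one_ne_zero).ae_le (ae_liminf_lt_top
    (C := ENNReal.ofReal M) (fun n ↦ (hcont n).measurable.ennreal_ofReal) ENNReal.ofReal_ne_top
    fun n ↦ ?_)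
  obtain ⟨M', hM'⟩ := hbdd (η n) (hη n)
  have hpoisson := integral_log_norm_cauchyMeasure hG hre (hη n) hM' (z := I) (by simp)
  simp only [Complex.I_re, Complex.I_im, Real.toNNReal_one] at hpoisson
  have hInt : Integrable (fun t : ℝ ↦ Real.log ‖G (t + η n * I)‖) (cauchyMeasure 0 1) := by
    refine .of_bound (hcont n).aestronglyMeasurable M' (.of_forall fun t ↦ ?_)
    rw [Real.norm_of_nonneg (hlog n t)]
    exact (Real.log_le_self (norm_nonneg _)).trans (hM' _ (by simp))
  rw [← ofReal_integral_eq_lintegral_ofReal hInt (.of_forall (hlog n)), hpoisson]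
  gcongr
  exact (Real.log_le_self (norm_nonneg _)).trans (hM _ (by simpa using (hη n).le))

theorem ae_exists_tendsto_of_one_le_re (hG : DifferentiableOn ℂ G {z | 0 < z.im})
    (hre : ∀ z : ℂ, 0 < z.im → 1 ≤ (G z).re)
    (hbdd : ∀ η > 0, ∃ M, ∀ z : ℂ, η ≤ z.im → ‖G z‖ ≤ M) :
    ∀ᵐ x : ℝ, ∃ c, Tendsto (fun y : ℝ ↦ G (x + y * I)) (𝓝[>] 0) (𝓝 c) := by
  have hnorm (z : ℂ) (hz : 0 < z.im) : 1 ≤ ‖G z‖ := one_le_norm_of_one_le_re (hre z hz)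
  obtain ⟨η, -, hη, hη₀⟩ := exists_seq_strictAnti_tendsto (0 : ℝ)
  have hη' : Tendsto η atTop (𝓝[>] 0) := tendsto_nhdsWithin_iff.2 ⟨hη₀, .of_forall hη⟩
  have hinv := ae_exists_tendsto_of_norm_le
    (hG.inv fun z hz ↦ norm_pos_iff.1 (one_pos.trans_le (hnorm z hz))) (M := 1) fun z hz ↦ by
      simpa using inv_le_one_of_one_le₀ (hnorm z hz)
  filter_upwards [hinv, ae_liminf_log_norm_lt_top hG hre hbdd hη] with x ⟨c, hc⟩ hliminf
  have hc₀ : c ≠ 0 := by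
    rintro rfl
    have hatTop : Tendsto (fun n ↦ ‖G (x + η n * I)‖) atTop atTop := by
      refine tendsto_norm_cobounded_atTop.comp ?_
      simpa [Function.comp_def] using (tendsto_inv₀_nhdsNE_zero (α := ℂ)).comp
        (tendsto_nhdsWithin_iff.2 ⟨hc.comp hη', .of_forall fun n ↦ inv_ne_zero <|
          norm_pos_iff.1 (one_pos.trans_le (hnorm _ (by simpa using hη n)))⟩)
    have := (ENNReal.tendsto_ofReal_atTop.comp (Real.tendsto_log_atTop.comp hatTop)).liminf_eq
    exact hliminf.ne this
  exact ⟨c⁻¹, by simpa using hc.inv₀ hc₀⟩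

end PositiveRealPart

section SchwarzIntegral

/-- The conjugate Poisson kernel of the upper half-plane at height `y`, companion of the Poisson
kernel `cauchyPDFReal 0 y`. -/
def conjPoissonKernel (y u : ℝ) : ℝ := π⁻¹ * (u / (u ^ 2 + y ^ 2))

/-- The Schwarz integral `(πi)⁻¹ ∫ dμ(t) / (t - z)` of a measure on the real line: a holomorphic
function on the upper half-plane whose real part is the Poisson integral of `μ`. -/
def schwarzIntegral (μ : Measure ℝ) (z : ℂ) : ℂ := (π * I)⁻¹ * resolventTransform μ z

variable {μ : Measure ℝ} [IsFiniteMeasure μ] {z : ℂ}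

lemma measurable_conjPoissonKernel (y : ℝ) : Measurable (conjPoissonKernel y) := by
  unfold conjPoissonKernel
  fun_prop

lemma notMem_algebraMap_image_of_im_pos (hz : 0 < z.im) (s : Set ℝ) :
    z ∉ algebraMap ℝ ℂ '' s := by
  rintro ⟨t, -, rfl⟩
  simp at hz

lemma differentiableOn_schwarzIntegral (μ : Measure ℝ) [IsFiniteMeasure μ] :
    DifferentiableOn ℂ (schwarzIntegral μ) {z | 0 < z.im} := fun z hz ↦
  ((hasDerivAt_resolventTransform z
    (notMem_algebraMap_image_of_im_pos hz _)).differentiableAt.const_mul _).differentiableWithinAt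

lemma resolvent_schwarz_eq (hz : 0 < z.im) (t : ℝ) :
    (π * I)⁻¹ * resolvent z t =
      cauchyPDFReal z.re z.im.toNNReal t - I * conjPoissonKernel z.im (t - z.re) := by
  have hne : (t : ℂ) - z ≠ 0 := fun h ↦ hz.ne' (by simpa using congrArg Complex.im h)
  have hcofactor : (t : ℂ) - z.re + I * z.im ≠ 0 := fun h ↦
    hz.ne' (by simpa using congrArg Complex.im h)
  have hden : (((t - z.re) ^ 2 + z.im ^ 2 : ℝ) : ℂ) = (t - z) * (t - z.re + I * z.im) := by
    nth_rw 3 [← Complex.re_add_im z]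
    push_cast
    linear_combination (z.im : ℂ) ^ 2 * Complex.I_sq
  have hres : resolvent z t = ((t : ℂ) - z)⁻¹ := by simp [resolvent]
  rw [hres, conjPoissonKernel, cauchyPDFReal_def, Real.coe_toNNReal _ hz.le, Complex.ofReal_mul,
    Complex.ofReal_mul, Complex.ofReal_mul, Complex.ofReal_inv, Complex.ofReal_inv,
    Complex.ofReal_div, hden, Complex.ofReal_sub]
  field_simp
  linear_combination (t - z.re : ℂ) * Complex.I_sq

lemma norm_resolvent_le_inv_im (hz : 0 < z.im) (t : ℝ) : ‖resolvent z t‖ ≤ z.im⁻¹ := by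
  have him : z.im ≤ ‖(t : ℂ) - z‖ := by
    simpa [abs_of_pos hz] using Complex.abs_im_le_norm ((t : ℂ) - z)
  simpa [resolvent] using inv_anti₀ hz him

lemma norm_schwarzIntegral_le (μ : Measure ℝ) [IsFiniteMeasure μ] (hz : 0 < z.im) :
    ‖schwarzIntegral μ z‖ ≤ z.im⁻¹ * μ.real univ := by
  have hInt : ‖resolventTransform μ z‖ ≤ z.im⁻¹ * μ.real univ :=
    norm_integral_le_of_norm_le_const (.of_forall (norm_resolvent_le_inv_im hz))
  have hpi : ‖((π : ℂ) * I)⁻¹‖ ≤ 1 := by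
    simpa [abs_of_pos Real.pi_pos] using
      inv_le_one_of_one_le₀ (by linarith [Real.pi_gt_three] : 1 ≤ π)
  simpa [schwarzIntegral] using mul_le_mul hpi hInt (norm_nonneg _) zero_le_one

lemma re_schwarzIntegral (μ : Measure ℝ) [IsFiniteMeasure μ] (hz : 0 < z.im) :
    (schwarzIntegral μ z).re = ∫ t, cauchyPDFReal z.re z.im.toNNReal t ∂μ := by
  have hInt := (integrable_resolvent (notMem_algebraMap_image_of_im_pos hz μ.support)).const_mul
    ((π : ℂ) * I)⁻¹
  rw [schwarzIntegral, resolventTransform, ← integral_const_mul, ← Complex.reCLM_apply,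
    ← Complex.reCLM.integral_comp_comm hInt]
  simp only [resolvent_schwarz_eq hz]
  simp

lemma im_schwarzIntegral (μ : Measure ℝ) [IsFiniteMeasure μ] (hz : 0 < z.im) :
    (schwarzIntegral μ z).im = -∫ t, conjPoissonKernel z.im (t - z.re) ∂μ := by
  have hInt := (integrable_resolvent (notMem_algebraMap_image_of_im_pos hz μ.support)).const_mul
    ((π : ℂ) * I)⁻¹
  rw [schwarzIntegral, resolventTransform, ← integral_const_mul, ← Complex.imCLM_apply,
    ← Complex.imCLM.integral_comp_comm hInt, ← integral_neg]
  simp only [resolvent_schwarz_eq hz]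
  simp

lemma one_le_re_one_add_schwarzIntegral (μ : Measure ℝ) [IsFiniteMeasure μ] (hz : 0 < z.im) :
    1 ≤ (1 + schwarzIntegral μ z).re := by
  rw [Complex.add_re, Complex.one_re, re_schwarzIntegral μ hz, le_add_iff_nonneg_right]
  exact integral_nonneg fun t ↦ cauchyPDFReal_nonneg _ _ t

lemma exists_norm_one_add_schwarzIntegral_le (μ : Measure ℝ) [IsFiniteMeasure μ] {η : ℝ}
    (hη : 0 < η) : ∃ M, ∀ z : ℂ, η ≤ z.im → ‖1 + schwarzIntegral μ z‖ ≤ M := by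
  refine ⟨1 + η⁻¹ * μ.real univ, fun z hz ↦ ?_⟩
  calc ‖1 + schwarzIntegral μ z‖ ≤ 1 + z.im⁻¹ * μ.real univ := by
        simpa using norm_add_le_of_le norm_one.le (norm_schwarzIntegral_le μ (hη.trans_le hz))
    _ ≤ 1 + η⁻¹ * μ.real univ := by gcongr

lemma ae_exists_tendsto_schwarzIntegral (μ : Measure ℝ) [IsFiniteMeasure μ] :
    ∀ᵐ x : ℝ, ∃ c, Tendsto (fun y : ℝ ↦ schwarzIntegral μ (x + y * I)) (𝓝[>] 0) (𝓝 c) := by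
  filter_upwards [ae_exists_tendsto_of_one_le_re
    ((differentiableOn_schwarzIntegral μ).const_add 1)
    (fun z ↦ one_le_re_one_add_schwarzIntegral μ)
    (fun η ↦ exists_norm_one_add_schwarzIntegral_le μ)] with x ⟨c, hc⟩
  exact ⟨c - 1, by simpa using hc.sub_const 1⟩

end SchwarzIntegral

section HilbertTransform

variable {E : Type*} [NormedAddCommGroup E] [NormedSpace ℝ E] {f : ℝ → E} {x y ε : ℝ}

/-- The kernel of the Hilbert transform on the real line, truncated at distance `ε`. -/
def truncatedHilbertKernel (ε u : ℝ) : ℝ := if ε ≤ |u| then (π * u)⁻¹ else 0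

/-- The truncated Hilbert transform `π⁻¹ ∫_{ε ≤ |t - x|} f t / (t - x) dt` on the real line. -/
def truncatedHilbertTransform (f : ℝ → E) (ε x : ℝ) : E :=
  ∫ t, truncatedHilbertKernel ε (t - x) • f t

/-- The Hilbert transform on the real line, as a principal value; a junk value where the
truncations do not converge. -/
def hilbertTransform (f : ℝ → E) (x : ℝ) : E :=
  limUnder (𝓝[>] 0) fun ε ↦ truncatedHilbertTransform f ε x

lemma measurable_truncatedHilbertKernel (ε : ℝ) : Measurable (truncatedHilbertKernel ε) :=
  .ite (measurableSet_le measurable_const (by fun_prop)) (by fun_prop) measurable_const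

lemma abs_truncatedHilbertKernel_le (hε : 0 < ε) (u : ℝ) :
    |truncatedHilbertKernel ε u| ≤ (π * ε)⁻¹ := by
  rw [truncatedHilbertKernel]
  split_ifs with h
  · rw [abs_inv, abs_mul, abs_of_pos Real.pi_pos]
    gcongr
  · rw [abs_zero]
    positivity

lemma abs_conjPoissonKernel_le (hy : 0 < y) (u : ℝ) : |conjPoissonKernel y u| ≤ (π * y)⁻¹ := by
  rw [conjPoissonKernel, abs_mul, abs_div, abs_of_pos (by positivity : 0 < u ^ 2 + y ^ 2),
    abs_of_pos (by positivity : 0 < π⁻¹), mul_inv]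
  gcongr
  rw [div_le_iff₀ (by positivity), inv_mul_eq_div, le_div_iff₀ hy, ← sq_abs u]
  nlinarith [sq_nonneg (|u| - y)]

lemma abs_conjPoissonKernel_sub_truncatedHilbertKernel_le (hy : 0 < y) (u : ℝ) :
    |conjPoissonKernel y u - truncatedHilbertKernel y u| ≤ cauchyPDFReal 0 y.toNNReal u := by
  rw [cauchyPDFReal_def, Real.coe_toNNReal _ hy.le, conjPoissonKernel, truncatedHilbertKernel,
    sub_zero]
  split_ifs with h
  · have hu : 0 < |u| := hy.trans_le h
    have hu₀ : u ≠ 0 := abs_pos.1 hu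
    have hker : π⁻¹ * (u / (u ^ 2 + y ^ 2)) - (π * u)⁻¹ =
        -(π⁻¹ * y * (u ^ 2 + y ^ 2)⁻¹ * (y / u)) := by
      field_simp
      ring
    rw [hker, abs_neg, abs_mul, abs_of_nonneg (by positivity), abs_div, abs_of_pos hy]
    exact mul_le_of_le_one_right (by positivity) ((div_le_one hu).2 h)
  · rw [sub_zero, abs_mul, abs_div, abs_of_pos (by positivity : 0 < u ^ 2 + y ^ 2),
      abs_of_pos (by positivity : 0 < π⁻¹), mul_assoc, ← div_eq_mul_inv]
    gcongr
    exact (not_le.1 h).le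

lemma integrable_conjPoissonKernel_sub_truncatedHilbertKernel (hy : 0 < y) :
    Integrable (conjPoissonKernel y - truncatedHilbertKernel y) :=
  (integrable_cauchyPDFReal 0 (γ := y.toNNReal)).mono'
    ((measurable_conjPoissonKernel y).sub
      (measurable_truncatedHilbertKernel y)).aestronglyMeasurable
    (.of_forall (abs_conjPoissonKernel_sub_truncatedHilbertKernel_le hy))

lemma integral_conjPoissonKernel_sub_truncatedHilbertKernel (y : ℝ) :
    ∫ u, (conjPoissonKernel y - truncatedHilbertKernel y) u = 0 := by
  have hodd : ∀ u, (conjPoissonKernel y - truncatedHilbertKernel y) (-u) =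
      -(conjPoissonKernel y - truncatedHilbertKernel y) u := fun u ↦ by
    simp only [Pi.sub_apply, conjPoissonKernel, truncatedHilbertKernel, abs_neg, neg_sq]
    split_ifs <;> ring
  have hneg := integral_neg_eq_self (conjPoissonKernel y - truncatedHilbertKernel y) volume
  simp only [hodd, integral_neg] at hneg
  linarith

lemma integrable_conjPoissonKernel_smul (hf : Integrable f) (hy : 0 < y) (x : ℝ) :
    Integrable fun t ↦ conjPoissonKernel y (t - x) • f t :=
  hf.bdd_smul (π * y)⁻¹
    ((measurable_conjPoissonKernel y).comp (measurable_id.sub_const x)).aestronglyMeasurable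
    (.of_forall fun t ↦ abs_conjPoissonKernel_le hy (t - x))

lemma integrable_truncatedHilbertKernel_smul (hf : Integrable f) (hε : 0 < ε) (x : ℝ) :
    Integrable fun t ↦ truncatedHilbertKernel ε (t - x) • f t :=
  hf.bdd_smul (π * ε)⁻¹
    ((measurable_truncatedHilbertKernel ε).comp (measurable_id.sub_const x)).aestronglyMeasurable
    (.of_forall fun t ↦ abs_truncatedHilbertKernel_le hε (t - x))

lemma aestronglyMeasurable_truncatedHilbertTransform (hf : AEStronglyMeasurable f) (ε : ℝ) :
    AEStronglyMeasurable (truncatedHilbertTransform f ε) := by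
  have hker : AEStronglyMeasurable (fun p : ℝ × ℝ ↦ truncatedHilbertKernel ε (p.2 - p.1)) :=
    ((measurable_truncatedHilbertKernel ε).comp (by fun_prop)).aestronglyMeasurable
  exact (hker.smul hf.comp_snd).integral_prod_right'

lemma aestronglyMeasurable_hilbertTransform (hf : AEStronglyMeasurable f)
    (hlim : ∀ᵐ x, Tendsto (fun ε ↦ truncatedHilbertTransform f ε x) (𝓝[>] 0)
      (𝓝 (hilbertTransform f x))) : AEStronglyMeasurable (hilbertTransform f) :=
  aestronglyMeasurable_of_tendsto_ae (𝓝[>] (0 : ℝ))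
    (aestronglyMeasurable_truncatedHilbertTransform hf) hlim

variable [CompleteSpace E]

lemma integral_conjPoissonKernel_smul_sub_truncatedHilbertTransform (hf : Integrable f)
    (hy : 0 < y) (x : ℝ) :
    (∫ t, conjPoissonKernel y (t - x) • f t) - truncatedHilbertTransform f y x =
      ∫ t, (conjPoissonKernel y - truncatedHilbertKernel y) (t - x) • (f t - f x) := by
  have hconj := integrable_conjPoissonKernel_smul hf hy x
  have htrunc := integrable_truncatedHilbertKernel_smul hf hy x
  have herr : Integrable fun t ↦ (conjPoissonKernel y - truncatedHilbertKernel y) (t - x) :=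
    (integrable_conjPoissonKernel_sub_truncatedHilbertKernel hy).comp_sub_right x
  have hzero : ∫ t, (conjPoissonKernel y - truncatedHilbertKernel y) (t - x) = 0 := by
    rw [integral_sub_right_eq_self (conjPoissonKernel y - truncatedHilbertKernel y),
      integral_conjPoissonKernel_sub_truncatedHilbertKernel]
  calc (∫ t, conjPoissonKernel y (t - x) • f t) - truncatedHilbertTransform f y x
      = ∫ t, (conjPoissonKernel y - truncatedHilbertKernel y) (t - x) • f t := by
        rw [truncatedHilbertTransform, ← integral_sub hconj htrunc]
        simp only [Pi.sub_apply, sub_smul]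
    _ = _ := by
        simp only [smul_sub]
        rw [integral_sub _ (herr.smul_const (f x)), integral_smul_const, hzero, zero_smul, sub_zero]
        simpa only [Pi.sub_apply, sub_smul, Pi.sub_def] using hconj.sub htrunc

lemma enorm_integral_conjPoissonKernel_smul_sub_truncatedHilbertTransform_le (hf : Integrable f)
    (hy : 0 < y) (x : ℝ) :
    ‖(∫ t, conjPoissonKernel y (t - x) • f t) - truncatedHilbertTransform f y x‖ₑ ≤
      ∫⁻ t, ‖f t - f x‖ₑ ∂cauchyMeasure x y.toNNReal := by
  rw [integral_conjPoissonKernel_smul_sub_truncatedHilbertTransform hf hy,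
    lintegral_cauchyMeasure x (Real.toNNReal_pos.2 hy).ne']
  refine (enorm_integral_le_lintegral_enorm _).trans (lintegral_mono fun t ↦ ?_)
  rw [enorm_smul, cauchyPDF]
  gcongr
  rw [Real.enorm_eq_ofReal_abs]
  refine ENNReal.ofReal_le_ofReal ?_
  simpa only [cauchyPDFReal_def, sub_zero, Pi.sub_apply] using
    abs_conjPoissonKernel_sub_truncatedHilbertKernel_le hy (t - x)

lemma ae_tendsto_integral_conjPoissonKernel_smul_sub_truncatedHilbertTransform
    (hf : Integrable f) :
    ∀ᵐ x, Tendsto (fun y ↦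
      (∫ t, conjPoissonKernel y (t - x) • f t) - truncatedHilbertTransform f y x)
        (𝓝[>] 0) (𝓝 0) := by
  filter_upwards [ae_tendsto_lintegral_enorm_sub_cauchyMeasure (x₀ := 0) one_ne_zero
    (integrable_cauchyMeasure_of_integrable hf 0 one_ne_zero)] with x hx
  rw [tendsto_zero_iff_enorm_tendsto_zero]
  refine tendsto_of_tendsto_of_tendsto_of_le_of_le' tendsto_const_nhds hx
    (.of_forall fun _ ↦ zero_le) ?_
  filter_upwards [self_mem_nhdsWithin] with y hy
  exact enorm_integral_conjPoissonKernel_smul_sub_truncatedHilbertTransform_le hf hy x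

end HilbertTransform

section HilbertTransformExists

variable {h : ℝ → ℝ≥0} {z : ℂ} {f : ℝ → ℂ} {ε : ℝ}

lemma isFiniteMeasure_withDensity_coe (hh : Integrable fun t ↦ (h t : ℝ)) :
    IsFiniteMeasure (volume.withDensity fun t ↦ (h t : ℝ≥0∞)) :=
  isFiniteMeasure_withDensity (by simpa [HasFiniteIntegral] using hh.2.ne)

lemma re_schwarzIntegral_withDensity (hh : Integrable fun t ↦ (h t : ℝ)) (hz : 0 < z.im) :
    (schwarzIntegral (volume.withDensity fun t ↦ h t) z).re =
      ∫ t, (h t : ℝ) ∂cauchyMeasure z.re z.im.toNNReal := by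
  have := isFiniteMeasure_withDensity_coe hh
  rw [re_schwarzIntegral _ hz, integral_withDensity_eq_integral_smul₀
    (by simpa using hh.1.aemeasurable.real_toNNReal),
    integral_cauchyMeasure _ (Real.toNNReal_pos.2 hz).ne']
  simp only [NNReal.smul_def, smul_eq_mul, mul_comm]

lemma im_schwarzIntegral_withDensity (hh : Integrable fun t ↦ (h t : ℝ)) (hz : 0 < z.im) :
    (schwarzIntegral (volume.withDensity fun t ↦ h t) z).im =
      -∫ t, conjPoissonKernel z.im (t - z.re) • (h t : ℝ) := by
  have := isFiniteMeasure_withDensity_coe hh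
  rw [im_schwarzIntegral _ hz, integral_withDensity_eq_integral_smul₀
    (by simpa using hh.1.aemeasurable.real_toNNReal)]
  simp only [NNReal.smul_def, smul_eq_mul, mul_comm]

lemma ae_tendsto_im_schwarzIntegral_and_tendsto_truncatedHilbertTransform_coe
    (hh : Integrable fun t ↦ (h t : ℝ)) : ∀ᵐ x : ℝ,
      Tendsto (fun y : ℝ ↦ (schwarzIntegral (volume.withDensity fun t ↦ h t) (x + y * I)).im)
        (𝓝[>] 0) (𝓝 (-hilbertTransform (fun t ↦ (h t : ℝ)) x)) ∧
      Tendsto (fun ε ↦ truncatedHilbertTransform (fun t ↦ (h t : ℝ)) ε x)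
        (𝓝[>] 0) (𝓝 (hilbertTransform (fun t ↦ (h t : ℝ)) x)) := by
  have := isFiniteMeasure_withDensity_coe hh
  filter_upwards [ae_exists_tendsto_schwarzIntegral (volume.withDensity fun t ↦ (h t : ℝ≥0∞)),
    ae_tendsto_integral_conjPoissonKernel_smul_sub_truncatedHilbertTransform hh] with x ⟨c, hc⟩ hx
  have him := (Complex.continuous_im.tendsto c).comp hc
  have htrunc : Tendsto (fun ε ↦ truncatedHilbertTransform (fun t ↦ (h t : ℝ)) ε x)
      (𝓝[>] 0) (𝓝 (-c.im)) := by
    refine (by simpa using him.neg.sub hx : Tendsto _ _ (𝓝 (-c.im))).congr' ?_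
    filter_upwards [self_mem_nhdsWithin] with y hy
    rw [mem_Ioi] at hy
    simp [im_schwarzIntegral_withDensity hh (z := x + y * I) (by simpa using hy)]
  rw [hilbertTransform, htrunc.limUnder_eq, neg_neg]
  exact ⟨him, htrunc⟩

/-- The positive part of the component of `z` in the direction `I ^ k`. -/
def rotatedPosPart (k : ℕ) (z : ℂ) : ℝ≥0 := ((-I) ^ k * z).re.toNNReal

lemma rotatedPosPart_le_norm (k : ℕ) (z : ℂ) : rotatedPosPart k z ≤ ‖z‖ := by
  rw [rotatedPosPart, Real.coe_toNNReal']
  refine max_le ((Complex.re_le_norm _).trans_eq ?_) (norm_nonneg z)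
  simp

lemma continuous_rotatedPosPart (k : ℕ) : Continuous (rotatedPosPart k) :=
  continuous_real_toNNReal.comp (by fun_prop)

lemma sum_I_pow_mul_rotatedPosPart (z : ℂ) :
    ∑ k ∈ Finset.range 4, I ^ k * (rotatedPosPart k z : ℝ) = z := by
  simp only [Finset.sum_range_succ, Finset.sum_range_zero, rotatedPosPart, Real.coe_toNNReal']
  apply Complex.ext
  · simpa [pow_succ, -max_zero_sub_max_neg_zero_eq_self, ← sub_eq_add_neg] using
      max_zero_sub_max_neg_zero_eq_self z.re
  · simpa [pow_succ, -max_zero_sub_max_neg_zero_eq_self, ← sub_eq_add_neg] using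
      max_zero_sub_max_neg_zero_eq_self z.im

lemma integrable_rotatedPosPart_comp (hf : Integrable f) (k : ℕ) :
    Integrable fun t ↦ (rotatedPosPart k (f t) : ℝ) :=
  hf.norm.mono' (NNReal.continuous_coe.comp_aestronglyMeasurable
    ((continuous_rotatedPosPart k).comp_aestronglyMeasurable hf.1))
    (.of_forall fun t ↦ by simpa using rotatedPosPart_le_norm k (f t))

lemma truncatedHilbertTransform_eq_sum_rotatedPosPart (hf : Integrable f) (hε : 0 < ε) (x : ℝ) :
    truncatedHilbertTransform f ε x = ∑ k ∈ Finset.range 4,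
      I ^ k * (truncatedHilbertTransform (fun t ↦ (rotatedPosPart k (f t) : ℝ)) ε x : ℝ) := by
  have hInt (k : ℕ) : Integrable fun t ↦
      ((truncatedHilbertKernel ε (t - x) • (rotatedPosPart k (f t) : ℝ) : ℝ) : ℂ) :=
    (integrable_truncatedHilbertKernel_smul (integrable_rotatedPosPart_comp hf k) hε x).ofReal
  simp only [truncatedHilbertTransform, ← integral_complex_ofReal]
  simp only [← integral_const_mul]
  rw [← integral_finsetSum _ fun k _ ↦ (hInt k).const_mul (I ^ k)]
  congr 1 with t
  nth_rw 1 [← sum_I_pow_mul_rotatedPosPart (f t), Finset.smul_sum]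
  refine Finset.sum_congr rfl fun k _ ↦ ?_
  rw [smul_eq_mul, Complex.ofReal_mul, Complex.real_smul, mul_left_comm]

lemma ae_tendsto_truncatedHilbertTransform_sum_rotatedPosPart (hf : Integrable f) :
    ∀ᵐ x, Tendsto (fun ε ↦ truncatedHilbertTransform f ε x) (𝓝[>] 0)
      (𝓝 (∑ k ∈ Finset.range 4,
        I ^ k * (hilbertTransform (fun t ↦ (rotatedPosPart k (f t) : ℝ)) x : ℝ))) := by
  have hparts : ∀ᵐ x, ∀ k, Tendsto
      (fun ε ↦ truncatedHilbertTransform (fun t ↦ (rotatedPosPart k (f t) : ℝ)) ε x) (𝓝[>] 0)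
      (𝓝 (hilbertTransform (fun t ↦ (rotatedPosPart k (f t) : ℝ)) x)) :=
    ae_all_iff.2 fun k ↦
      (ae_tendsto_im_schwarzIntegral_and_tendsto_truncatedHilbertTransform_coe
        (integrable_rotatedPosPart_comp hf k)).mono fun x hx ↦ hx.2
  filter_upwards [hparts] with x hx
  refine (tendsto_finsetSum _ fun k _ ↦
    ((Complex.continuous_ofReal.tendsto _).comp (hx k)).const_mul (I ^ k)).congr' ?_
  filter_upwards [self_mem_nhdsWithin] with ε hε
  exact (truncatedHilbertTransform_eq_sum_rotatedPosPart hf hε x).symm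

lemma ae_tendsto_truncatedHilbertTransform (hf : Integrable f) :
    ∀ᵐ x, Tendsto (fun ε ↦ truncatedHilbertTransform f ε x) (𝓝[>] 0)
      (𝓝 (hilbertTransform f x)) := by
  filter_upwards [ae_tendsto_truncatedHilbertTransform_sum_rotatedPosPart hf] with x hx
  rwa [hilbertTransform, hx.limUnder_eq]

lemma ae_enorm_hilbertTransform_le_sum (hf : Integrable f) :
    ∀ᵐ x, ‖hilbertTransform f x‖ₑ ≤ ∑ k ∈ Finset.range 4,
      ‖hilbertTransform (fun t ↦ (rotatedPosPart k (f t) : ℝ)) x‖ₑ := by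
  filter_upwards [ae_tendsto_truncatedHilbertTransform_sum_rotatedPosPart hf] with x hx
  rw [hilbertTransform, hx.limUnder_eq]
  refine (enorm_sum_le _ _).trans_eq (Finset.sum_congr rfl fun k _ ↦ ?_)
  rw [enorm_mul, enorm_pow, ← ofReal_norm I, Complex.norm_I, ENNReal.ofReal_one, one_pow, one_mul,
    ← ofReal_norm, Complex.norm_real, ofReal_norm]

end HilbertTransformExists

section ZygmundInequality

lemma one_add_sq_le_exp {τ : ℝ} (hτ : 0 ≤ τ) : 1 + τ ^ 2 ≤ Real.exp τ := by
  have htaylor := Real.sum_le_exp_of_nonneg hτ 4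
  norm_num [Finset.sum_range_succ, Nat.factorial] at htaylor
  nlinarith [mul_nonneg hτ (sq_nonneg (τ - 3 / 2))]

lemma abs_le_three_add_mul_arctan_sub_log (τ : ℝ) :
    |τ| ≤ 3 + 4 * (τ * Real.arctan τ - Real.log (1 + τ ^ 2) / 2) := by
  wlog hτ : 0 ≤ τ generalizing τ
  · simpa using this (-τ) (by linarith)
  have hlog : Real.log (1 + τ ^ 2) ≤ τ :=
    (Real.log_le_iff_le_exp (by positivity)).2 (one_add_sq_le_exp hτ)
  rw [abs_of_nonneg hτ]
  rcases le_total 1 τ with h | h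
  · have harctan : π / 4 ≤ Real.arctan τ := Real.arctan_one ▸ Real.arctan_mono h
    nlinarith [Real.pi_gt_three]
  · nlinarith [Real.arctan_nonneg.2 hτ]

lemma arg_eq_arctan {w : ℂ} (hw : 0 < w.re) : w.arg = Real.arctan (w.im / w.re) := by
  obtain ⟨hlo, hhi⟩ := abs_lt.1 (Complex.abs_arg_lt_pi_div_two_iff.2 (.inl hw))
  rw [← Complex.tan_arg, Real.arctan_tan hlo hhi]

lemma log_norm_eq_log_re_add {w : ℂ} (hw : 0 < w.re) :
    Real.log ‖w‖ = Real.log w.re + Real.log (1 + (w.im / w.re) ^ 2) / 2 := by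
  have hsq : ‖w‖ ^ 2 = w.re ^ 2 * (1 + (w.im / w.re) ^ 2) := by
    rw [Complex.sq_norm, Complex.normSq_apply]
    field_simp
  have hlog := congrArg Real.log hsq
  rw [Real.log_mul (by positivity) (by positivity), Real.log_pow, Real.log_pow] at hlog
  push_cast at hlog
  linarith

lemma re_mul_log (w : ℂ) :
    (w * Complex.log w).re = w.re * Real.log ‖w‖ - w.im * w.arg := by
  rw [Complex.mul_re, Complex.log_re, Complex.log_im]

lemma abs_im_le_three_mul_re_add {w : ℂ} (hw : 0 < w.re) :
    |w.im| ≤ 3 * w.re + 4 * (w.re * Real.log w.re - (w * Complex.log w).re) := by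
  rw [re_mul_log, log_norm_eq_log_re_add hw, arg_eq_arctan hw]
  calc |w.im| = w.re * |w.im / w.re| := by rw [abs_div, abs_of_pos hw]; field_simp
    _ ≤ w.re * (3 + 4 * (w.im / w.re * Real.arctan (w.im / w.re) -
          Real.log (1 + (w.im / w.re) ^ 2) / 2)) := by
        gcongr
        exact abs_le_three_add_mul_arctan_sub_log _
    _ = _ := by
        field_simp
        ring

lemma neg_re_mul_log_le {w : ℂ} (hw : 1 ≤ w.re) :
    -(w * Complex.log w).re ≤ π / 2 * |w.im| := by
  have hlog : 0 ≤ w.re * Real.log ‖w‖ :=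
    mul_nonneg (by linarith) (Real.log_nonneg (one_le_norm_of_one_le_re hw))
  have harg : |w.arg| ≤ π / 2 :=
    (Complex.abs_arg_lt_pi_div_two_iff.2 (.inl (by linarith))).le
  have hmul : w.im * w.arg ≤ |w.im| * (π / 2) :=
    (le_abs_self _).trans ((abs_mul _ _).trans_le (by gcongr))
  rw [re_mul_log]
  linarith

lemma integral_abs_im_le {α : Type*} [MeasurableSpace α] {μ : Measure α} {g : α → ℂ}
    (hpos : ∀ a, 0 < (g a).re) (hg : Integrable g μ)
    (hre : Integrable (fun a ↦ (g a).re * Real.log (g a).re) μ)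
    (hglog : Integrable (fun a ↦ g a * Complex.log (g a)) μ) :
    ∫ a, |(g a).im| ∂μ ≤ 3 * (∫ a, g a ∂μ).re +
      4 * (∫ a, (g a).re * Real.log (g a).re ∂μ - (∫ a, g a * Complex.log (g a) ∂μ).re) := by
  have hglogre : Integrable (fun a ↦ (g a * Complex.log (g a)).re) μ := hglog.re
  have hdiff := hre.sub hglogre
  calc ∫ a, |(g a).im| ∂μ
      ≤ ∫ a, 3 * (g a).re + 4 * ((g a).re * Real.log (g a).re - (g a * Complex.log (g a)).re) ∂μ :=
        integral_mono hg.im.abs ((hg.re.const_mul 3).add (hdiff.const_mul 4))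
          fun a ↦ abs_im_le_three_mul_re_add (hpos a)
    _ = 3 * ∫ a, (g a).re ∂μ + 4 * (∫ a, (g a).re * Real.log (g a).re ∂μ -
          ∫ a, (g a * Complex.log (g a)).re ∂μ) := by
        rw [← integral_sub hre hglogre, ← integral_const_mul, ← integral_const_mul]
        exact integral_add (hg.re.const_mul 3) (hdiff.const_mul 4)
    _ = _ := by
        congr 3
        · exact integral_re hg
        · exact integral_re hglog

lemma norm_mul_log_le {w : ℂ} {M : ℝ} (hw : 1 ≤ ‖w‖) (hM : ‖w‖ ≤ M) :
    ‖w * Complex.log w‖ ≤ M * (M + π) := by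
  rw [norm_mul]
  exact mul_le_mul hM (norm_log_le_of_one_le_norm hw hM) (norm_nonneg _) (by linarith)

lemma integrable_re_mul_log_re {α : Type*} [MeasurableSpace α] {μ : Measure α} [IsFiniteMeasure μ]
    {g : α → ℂ} (hg : AEStronglyMeasurable g μ) (hre : ∀ a, 1 ≤ (g a).re) {M : ℝ}
    (hM : ∀ a, ‖g a‖ ≤ M) : Integrable (fun a ↦ (g a).re * Real.log (g a).re) μ := by
  refine .of_bound ((Real.continuous_mul_log.comp
    Complex.continuous_re).comp_aestronglyMeasurable hg) (M * M) (.of_forall fun a ↦ ?_)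
  have hreM : (g a).re ≤ M := (Complex.re_le_norm _).trans (hM a)
  rw [Real.norm_of_nonneg (Real.mul_log_nonneg (hre a))]
  exact mul_le_mul hreM ((Real.log_le_self (by linarith [hre a])).trans hreM)
    (Real.log_nonneg (hre a)) (by linarith [hre a])

-- `G log G` is holomorphic, so its mean against the Poisson kernel is its value at one point.
lemma integral_abs_im_cauchyMeasure_le {G : ℂ → ℂ} (hG : DifferentiableOn ℂ G {z | 0 < z.im})
    (hre : ∀ z : ℂ, 0 < z.im → 1 ≤ (G z).re) {η M : ℝ} (hη : 0 < η)
    (hM : ∀ z : ℂ, η ≤ z.im → ‖G z‖ ≤ M) {z : ℂ} (hz : 0 < z.im) :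
    ∫ t : ℝ, |(G (t + η * I)).im| ∂cauchyMeasure z.re z.im.toNNReal ≤
      3 * (G (z + η * I)).re + 2 * π * |(G (z + η * I)).im| +
        4 * ∫ t : ℝ, (G (t + η * I)).re * Real.log (G (t + η * I)).re
          ∂cauchyMeasure z.re z.im.toNNReal := by
  have hre' (t : ℝ) : 1 ≤ (G (t + η * I)).re := hre _ (by simpa using hη)
  have hM' (t : ℝ) : ‖G (t + η * I)‖ ≤ M := hM _ (by simp)
  have hcont : Continuous fun t : ℝ ↦ G (t + η * I) :=
    continuous_comp_add_mul_I hG.continuousOn hη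
  have hGlog : DifferentiableOn ℂ (fun w ↦ G w * Complex.log (G w)) {w | 0 < w.im} :=
    hG.mul (differentiableOn_log_comp hG hre)
  have hGlogM (w : ℂ) (hw : η ≤ w.im) : ‖G w * Complex.log (G w)‖ ≤ M * (M + π) :=
    norm_mul_log_le (one_le_norm_of_one_le_re (hre w (hη.trans_le hw))) (hM w hw)
  have hzygmund := integral_abs_im_le (μ := cauchyMeasure z.re z.im.toNNReal)
    (fun t ↦ one_pos.trans_le (hre' t))
    (.of_bound hcont.aestronglyMeasurable M (.of_forall hM'))
    (integrable_re_mul_log_re hcont.aestronglyMeasurable hre' hM')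
    (.of_bound (continuous_comp_add_mul_I hGlog.continuousOn hη).aestronglyMeasurable _
      (.of_forall fun t ↦ hGlogM _ (by simp)))
  rw [integral_cauchyMeasure_shift hη hG hM hz,
    integral_cauchyMeasure_shift hη hGlog hGlogM hz] at hzygmund
  have hval := neg_re_mul_log_le (hre (z + η * I) (by simpa using add_pos hz hη))
  linarith

lemma cauchyMeasure_zero_one_le_volume : cauchyMeasure 0 1 ≤ volume := by
  rw [cauchyMeasure_of_scale_ne_zero 0 one_ne_zero]
  nth_rw 2 [← withDensity_one (μ := volume)]
  refine withDensity_mono (.of_forall fun t ↦ ?_)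
  exact ENNReal.ofReal_le_one.2 (cauchyPDFReal_zero_one_le_one t)

lemma lintegral_lintegral_cauchyMeasure {γ : ℝ≥0} (hγ : γ ≠ 0) {g : ℝ → ℝ≥0∞}
    (hg : AEMeasurable g) : ∫⁻ x, ∫⁻ t, g t ∂cauchyMeasure x γ = ∫⁻ t, g t := by
  simp only [lintegral_cauchyMeasure _ hγ]
  have hpdf : Measurable fun p : ℝ × ℝ ↦ cauchyPDF p.1 γ p.2 := by
    simp only [cauchyPDF, cauchyPDFReal_def]
    fun_prop
  rw [lintegral_lintegral_swap (hpdf.aemeasurable.mul hg.comp_snd)]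
  refine lintegral_congr fun t ↦ ?_
  rw [lintegral_mul_const _ hpdf.of_uncurry_right]
  have hcomm (x : ℝ) : cauchyPDF x γ t = cauchyPDF t γ x :=
    congrArg ENNReal.ofReal (cauchyPDFReal_comm x γ t)
  simp only [hcomm, lintegral_cauchyPDF_eq_one t hγ, one_mul]

/-- The Young function `s ↦ (1 + s) log (1 + s)` of the space `L log L`. -/
def youngLLogL (s : ℝ) : ℝ := (1 + s) * Real.log (1 + s)

lemma le_youngLLogL {s : ℝ} (hs : 0 ≤ s) : s ≤ youngLLogL s := by
  have hlog := Real.one_sub_inv_le_log_of_pos (by linarith : 0 < 1 + s)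
  calc s = (1 + s) * (1 - (1 + s)⁻¹) := by field_simp; ring
    _ ≤ _ := by unfold youngLLogL; gcongr

lemma youngLLogL_nonneg {s : ℝ} (hs : 0 ≤ s) : 0 ≤ youngLLogL s := hs.trans (le_youngLLogL hs)

lemma youngLLogL_le_youngLLogL {s s' : ℝ} (hs : 0 ≤ s) (h : s ≤ s') :
    youngLLogL s ≤ youngLLogL s' := by
  unfold youngLLogL
  gcongr
  · exact Real.log_nonneg (by linarith)
  · linarith

lemma continuous_youngLLogL : Continuous youngLLogL :=
  Real.continuous_mul_log.comp (continuous_const_add 1)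

end ZygmundInequality

section ZygmundHilbertTransform

variable {h : ℝ → ℝ≥0} {f : ℝ → ℂ}

lemma convexOn_youngLLogL : ConvexOn ℝ (Ici 0) youngLLogL :=
  (Real.convexOn_mul_log.translate_right 1).subset
    (fun s (hs : 0 ≤ s) ↦ by simpa using neg_one_lt_zero.le.trans hs) (convex_Ici 0)

lemma integrable_of_integrable_youngLLogL_norm {α E : Type*} [MeasurableSpace α]
    [NormedAddCommGroup E] {μ : Measure α} {g : α → E} (hg : AEStronglyMeasurable g μ)
    (hψ : Integrable (fun a ↦ youngLLogL ‖g a‖) μ) : Integrable g μ :=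
  hψ.mono' hg (.of_forall fun _ ↦ le_youngLLogL (norm_nonneg _))

lemma youngLLogL_integral_le {α : Type*} [MeasurableSpace α] {μ : Measure α}
    [IsProbabilityMeasure μ] {g : α → ℝ≥0} (hg : Integrable (fun a ↦ (g a : ℝ)) μ)
    (hψ : Integrable (fun a ↦ youngLLogL (g a)) μ) :
    youngLLogL (∫ a, (g a : ℝ) ∂μ) ≤ ∫ a, youngLLogL (g a) ∂μ :=
  convexOn_youngLLogL.map_integral_le continuous_youngLLogL.continuousOn isClosed_Ici
    (.of_forall fun a ↦ (g a).coe_nonneg) hg hψ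

lemma integral_youngLLogL_integral_cauchyMeasure_le {γ : ℝ≥0} (hγ : γ ≠ 0)
    (hh : Integrable fun t ↦ (h t : ℝ)) (hψ : Integrable fun t ↦ youngLLogL (h t)) :
    ∫ x, youngLLogL (∫ t, (h t : ℝ) ∂cauchyMeasure x γ) ∂cauchyMeasure 0 1 ≤
      ∫ t, youngLLogL (h t) := by
  have hnonneg (t : ℝ) : 0 ≤ youngLLogL (h t) := youngLLogL_nonneg (h t).coe_nonneg
  have hjensen (x : ℝ) : ENNReal.ofReal ‖youngLLogL (∫ t, (h t : ℝ) ∂cauchyMeasure x γ)‖ ≤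
      ∫⁻ t, ENNReal.ofReal (youngLLogL (h t)) ∂cauchyMeasure x γ := by
    have hψx := integrable_cauchyMeasure_of_integrable hψ x hγ
    rw [Real.norm_of_nonneg (youngLLogL_nonneg (integral_nonneg fun t ↦ (h t).coe_nonneg)),
      ← ofReal_integral_eq_lintegral_ofReal hψx (.of_forall hnonneg)]
    exact ENNReal.ofReal_le_ofReal
      (youngLLogL_integral_le (integrable_cauchyMeasure_of_integrable hh x hγ) hψx)
  have hle : ∫⁻ x, ENNReal.ofReal ‖youngLLogL (∫ t, (h t : ℝ) ∂cauchyMeasure x γ)‖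
      ∂cauchyMeasure 0 1 ≤ ENNReal.ofReal (∫ t, youngLLogL (h t)) :=
    calc _ ≤ ∫⁻ x, ∫⁻ t, ENNReal.ofReal (youngLLogL (h t)) ∂cauchyMeasure x γ :=
          lintegral_mono' cauchyMeasure_zero_one_le_volume hjensen
      _ = _ := by
          rw [lintegral_lintegral_cauchyMeasure hγ hψ.1.aemeasurable.ennreal_ofReal,
            ofReal_integral_eq_lintegral_ofReal hψ (.of_forall hnonneg)]
  exact (Real.le_norm_self _).trans <| (norm_integral_le_lintegral_norm _).trans <|
    ENNReal.toReal_le_of_le_ofReal (integral_nonneg hnonneg) hle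

lemma measureReal_univ_withDensity_coe (hh : Integrable fun t ↦ (h t : ℝ)) :
    (volume.withDensity fun t ↦ (h t : ℝ≥0∞)).real univ = ∫ t, (h t : ℝ) := by
  rw [measureReal_def, withDensity_apply _ MeasurableSet.univ, Measure.restrict_univ,
    integral_eq_lintegral_of_nonneg_ae (.of_forall fun t ↦ (h t).coe_nonneg) hh.1]
  simp only [ENNReal.ofReal_coe_nnreal]

lemma norm_schwarzIntegral_withDensity_le (hh : Integrable fun t ↦ (h t : ℝ)) {z : ℂ}
    (hz : 1 ≤ z.im) :
    ‖schwarzIntegral (volume.withDensity fun t ↦ h t) z‖ ≤ ∫ t, (h t : ℝ) := by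
  have := isFiniteMeasure_withDensity_coe hh
  refine (norm_schwarzIntegral_le _ (by linarith)).trans ?_
  rw [measureReal_univ_withDensity_coe hh]
  exact mul_le_of_le_one_left (integral_nonneg fun t ↦ (h t).coe_nonneg) (inv_le_one_of_one_le₀ hz)

lemma integral_abs_im_schwarzIntegral_le (hh : Integrable fun t ↦ (h t : ℝ))
    (hψ : Integrable fun t ↦ youngLLogL (h t)) {η : ℝ} (hη : 0 < η) :
    ∫ t : ℝ, |(schwarzIntegral (volume.withDensity fun t ↦ h t) (t + η * I)).im|
      ∂cauchyMeasure 0 1 ≤ 3 + 14 * ∫ t, youngLLogL (h t) := by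
  have := isFiniteMeasure_withDensity_coe hh
  set S := schwarzIntegral (volume.withDensity fun t ↦ (h t : ℝ≥0∞)) with hS
  obtain ⟨M, hM⟩ : ∃ M, ∀ z : ℂ, η ≤ z.im → ‖1 + S z‖ ≤ M :=
    exists_norm_one_add_schwarzIntegral_le _ hη
  have hzygmund := integral_abs_im_cauchyMeasure_le (G := fun z ↦ 1 + S z)
    ((differentiableOn_schwarzIntegral _).const_add 1)
    (fun z ↦ one_le_re_one_add_schwarzIntegral _) hη hM (z := I) (by simp)
  have hre (t : ℝ) : (1 + (S (t + η * I)).re) * Real.log (1 + (S (t + η * I)).re) =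
      youngLLogL (∫ u, (h u : ℝ) ∂cauchyMeasure t η.toNNReal) := by
    simp [youngLLogL, hS, re_schwarzIntegral_withDensity hh (z := t + η * I) (by simpa using hη)]
  have hjensen := integral_youngLLogL_integral_cauchyMeasure_le
    (Real.toNNReal_pos.2 hη).ne' hh hψ
  have hnorm : ‖S (I + η * I)‖ ≤ ∫ t, (h t : ℝ) :=
    norm_schwarzIntegral_withDensity_le hh (by simpa using hη.le)
  have hmass : ∫ t, (h t : ℝ) ≤ ∫ t, youngLLogL (h t) :=
    integral_mono hh hψ fun t ↦ le_youngLLogL (h t).coe_nonneg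
  simp only [Complex.I_re, Complex.I_im, Real.toNNReal_one, hre, Complex.add_im, Complex.one_im,
    zero_add, Complex.add_re, Complex.one_re] at hzygmund
  nlinarith [(Complex.re_le_norm _).trans hnorm, (Complex.abs_im_le_norm _).trans hnorm,
    Real.pi_lt_d2, Real.pi_pos, abs_nonneg (S (I + η * I)).im]

lemma continuous_im_schwarzIntegral (μ : Measure ℝ) [IsFiniteMeasure μ] {η : ℝ} (hη : 0 < η) :
    Continuous fun x : ℝ ↦ (schwarzIntegral μ (x + η * I)).im :=
  Complex.continuous_im.comp
    (continuous_comp_add_mul_I (differentiableOn_schwarzIntegral μ).continuousOn hη)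

lemma lintegral_enorm_im_schwarzIntegral_le (hh : Integrable fun t ↦ (h t : ℝ))
    (hψ : Integrable fun t ↦ youngLLogL (h t)) {η : ℝ} (hη : 0 < η) :
    ∫⁻ x : ℝ, ‖(schwarzIntegral (volume.withDensity fun t ↦ h t) (x + η * I)).im‖ₑ
      ∂cauchyMeasure 0 1 ≤ ENNReal.ofReal (3 + 14 * ∫ t, youngLLogL (h t)) := by
  have := isFiniteMeasure_withDensity_coe hh
  obtain ⟨M, hM⟩ := exists_norm_one_add_schwarzIntegral_le
    (volume.withDensity fun t ↦ (h t : ℝ≥0∞)) hη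
  rw [← ofReal_integral_norm_eq_lintegral_enorm (.of_bound
    (continuous_im_schwarzIntegral _ hη).aestronglyMeasurable M (.of_forall fun x ↦ ?_))]
  · exact ENNReal.ofReal_le_ofReal (integral_abs_im_schwarzIntegral_le hh hψ hη)
  · simpa using (Complex.abs_im_le_norm _).trans (hM (x + η * I) (by simp))

lemma lintegral_enorm_hilbertTransform_coe_le (hh : Integrable fun t ↦ (h t : ℝ))
    (hψ : Integrable fun t ↦ youngLLogL (h t)) :
    ∫⁻ x, ‖hilbertTransform (fun t ↦ (h t : ℝ)) x‖ₑ ∂cauchyMeasure 0 1 ≤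
      ENNReal.ofReal (3 + 14 * ∫ t, youngLLogL (h t)) := by
  have := isFiniteMeasure_withDensity_coe hh
  have hη (n : ℕ) : (0 : ℝ) < 1 / (n + 1) := Nat.one_div_pos_of_nat
  have hlim : ∀ᵐ x : ℝ ∂cauchyMeasure 0 1, Tendsto (fun n : ℕ ↦
      (schwarzIntegral (volume.withDensity fun t ↦ h t) (x + (1 / (n + 1) : ℝ) * I)).im) atTop
      (𝓝 (-hilbertTransform (fun t ↦ (h t : ℝ)) x)) := by
    refine (cauchyMeasure_absolutelyContinuous 0 one_ne_zero).ae_le ?_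
    filter_upwards [ae_tendsto_im_schwarzIntegral_and_tendsto_truncatedHilbertTransform_coe hh]
      with x hx
    exact hx.1.comp (tendsto_nhdsWithin_iff.2
      ⟨tendsto_one_div_add_atTop_nhds_zero_nat, .of_forall hη⟩)
  simpa only [enorm_neg] using (lintegral_enorm_le_liminf_of_tendsto hlim fun n ↦
    (continuous_im_schwarzIntegral _ (hη n)).measurable.enorm.aemeasurable).trans
      ((liminf_le_liminf (.of_forall fun n ↦
        lintegral_enorm_im_schwarzIntegral_le hh hψ (hη n))).trans_eq (liminf_const _))

lemma lintegral_enorm_hilbertTransform_le (hf : AEStronglyMeasurable f)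
    (hψ : Integrable fun t ↦ youngLLogL ‖f t‖) :
    ∫⁻ x, ‖hilbertTransform f x‖ₑ ∂cauchyMeasure 0 1 ≤
      ENNReal.ofReal (12 + 56 * ∫ t, youngLLogL ‖f t‖) := by
  have hfi := integrable_of_integrable_youngLLogL_norm hf hψ
  have hparti (k : ℕ) := integrable_rotatedPosPart_comp hfi k
  have hpartle (k : ℕ) (t : ℝ) : youngLLogL (rotatedPosPart k (f t)) ≤ youngLLogL ‖f t‖ :=
    youngLLogL_le_youngLLogL (rotatedPosPart k (f t)).coe_nonneg (rotatedPosPart_le_norm k (f t))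
  have hpartψ (k : ℕ) : Integrable fun t ↦ youngLLogL (rotatedPosPart k (f t)) :=
    hψ.mono' (continuous_youngLLogL.comp_aestronglyMeasurable (hparti k).1)
      (.of_forall fun t ↦ by
        simpa [abs_of_nonneg (youngLLogL_nonneg (NNReal.coe_nonneg _))] using hpartle k t)
  have hac := cauchyMeasure_absolutelyContinuous 0 one_ne_zero
  have hmeas (k : ℕ) : AEMeasurable
      (fun x ↦ ‖hilbertTransform (fun t ↦ (rotatedPosPart k (f t) : ℝ)) x‖ₑ)
      (cauchyMeasure 0 1) :=
    ((aestronglyMeasurable_hilbertTransform (hparti k).1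
      ((ae_tendsto_im_schwarzIntegral_and_tendsto_truncatedHilbertTransform_coe
        (hparti k)).mono fun _ hx ↦ hx.2)).mono_ac hac).enorm
  calc ∫⁻ x, ‖hilbertTransform f x‖ₑ ∂cauchyMeasure 0 1
      ≤ ∫⁻ x, ∑ k ∈ Finset.range 4,
          ‖hilbertTransform (fun t ↦ (rotatedPosPart k (f t) : ℝ)) x‖ₑ ∂cauchyMeasure 0 1 :=
        lintegral_mono_ae (hac.ae_le (ae_enorm_hilbertTransform_le_sum hfi))
    _ = ∑ k ∈ Finset.range 4, ∫⁻ x,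
          ‖hilbertTransform (fun t ↦ (rotatedPosPart k (f t) : ℝ)) x‖ₑ ∂cauchyMeasure 0 1 :=
        lintegral_finsetSum' _ fun k _ ↦ hmeas k
    _ ≤ ∑ k ∈ Finset.range 4, ENNReal.ofReal (3 + 14 * ∫ t, youngLLogL ‖f t‖) := by
        gcongr with k
        exact (lintegral_enorm_hilbertTransform_coe_le (hparti k) (hpartψ k)).trans
          (ENNReal.ofReal_le_ofReal (by gcongr; exacts [hpartψ k, hpartle k]))
    _ = ENNReal.ofReal (12 + 56 * ∫ t, youngLLogL ‖f t‖) := by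
        rw [Finset.sum_const, ← ENNReal.ofReal_nsmul]
        congr 1
        simp only [Finset.card_range, smul_add, nsmul_eq_mul, Nat.cast_ofNat]
        ring

lemma ae_hilbertTransform_const_smul (hf : Integrable f) (c : ℝ) :
    ∀ᵐ x, hilbertTransform (c • f) x = c • hilbertTransform f x := by
  filter_upwards [ae_tendsto_truncatedHilbertTransform hf] with x hx
  refine ((hx.const_smul c).congr fun ε ↦ ?_).limUnder_eq
  simp only [truncatedHilbertTransform, Pi.smul_apply, ← integral_smul, smul_comm c]

lemma one_le_const_mul_cauchyPDF {t : ℝ} (ht : t ∈ Ioo (-1) 1) :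
    1 ≤ ENNReal.ofReal (2 * π) * cauchyPDF 0 1 t := by
  have hsq : t ^ 2 ≤ 1 := (sq_le_one_iff_abs_le_one t).2 (abs_lt.2 ht).le
  rw [cauchyPDF, ← ENNReal.ofReal_mul (by positivity), ENNReal.one_le_ofReal, cauchyPDFReal_def,
    mul_assoc, NNReal.coe_one, mul_one, mul_inv_cancel_left₀ Real.pi_ne_zero,
    ← div_eq_mul_inv, le_div_iff₀ (by positivity)]
  linarith [sub_zero t]

lemma setLIntegral_Ioo_le_lintegral_cauchyMeasure (g : ℝ → ℝ≥0∞) :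
    ∫⁻ t in Ioo (-1) 1, g t ≤ ENNReal.ofReal (2 * π) * ∫⁻ t, g t ∂cauchyMeasure 0 1 := by
  rw [lintegral_cauchyMeasure 0 one_ne_zero, ← lintegral_const_mul' _ _ ENNReal.ofReal_ne_top]
  refine (setLIntegral_mono' measurableSet_Ioo fun t ht ↦ ?_).trans
    (setLIntegral_le_lintegral _ _)
  rw [← mul_assoc]
  exact le_mul_of_one_le_left' (one_le_const_mul_cauchyPDF ht)

lemma setLIntegral_enorm_hilbertTransform_le (hf : AEStronglyMeasurable f) {c : ℝ} (hc : 0 < c)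
    (hψ : Integrable fun t ↦ youngLLogL (‖f t‖ / c)) :
    ∫⁻ x in Ioo (-1) 1, ‖hilbertTransform f x‖ₑ ≤
      ENNReal.ofReal (c * (2 * π) * (12 + 56 * ∫ t, youngLLogL (‖f t‖ / c))) := by
  have hnorm (t : ℝ) : ‖(c⁻¹ • f) t‖ = ‖f t‖ / c := by
    rw [Pi.smul_apply, norm_smul, norm_inv, Real.norm_of_nonneg hc.le, inv_mul_eq_div]
  have hψ' : Integrable fun t ↦ youngLLogL ‖(c⁻¹ • f) t‖ := by simpa only [hnorm] using hψ
  have hscale : ∀ᵐ x, ‖hilbertTransform f x‖ₑ =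
      ENNReal.ofReal c * ‖hilbertTransform (c⁻¹ • f) x‖ₑ := by
    filter_upwards [ae_hilbertTransform_const_smul
      (integrable_of_integrable_youngLLogL_norm (hf.const_smul c⁻¹) hψ') c] with x hx
    rw [smul_inv_smul₀ hc.ne'] at hx
    rw [hx, enorm_smul, Real.enorm_of_nonneg hc.le]
  rw [lintegral_congr_ae (ae_restrict_of_ae hscale),
    lintegral_const_mul' _ _ ENNReal.ofReal_ne_top, mul_assoc, ENNReal.ofReal_mul hc.le]
  gcongr
  refine (setLIntegral_Ioo_le_lintegral_cauchyMeasure _).trans ?_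
  rw [ENNReal.ofReal_mul (p := 2 * π) (by positivity)]
  gcongr
  simpa only [hnorm] using lintegral_enorm_hilbertTransform_le (hf.const_smul c⁻¹) hψ'

end ZygmundHilbertTransform

section DecreasingRearrangement

variable {f : ℝ → ℂ} {s t : ℝ}

instance isFiniteMeasure_muI : IsFiniteMeasure μI := by
  unfold μI
  infer_instance

lemma muI_univ : μI univ = 2 := by
  rw [μI, Measure.restrict_apply_univ, Real.volume_Ioo]
  norm_num

lemma distFun_nonneg (f : ℝ → ℂ) (s : ℝ) : 0 ≤ distFun f s := ENNReal.toReal_nonneg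

lemma ofReal_distFun (f : ℝ → ℂ) (s : ℝ) :
    ENNReal.ofReal (distFun f s) = μI {x | s < ‖f x‖} := by
  have hset : {x | x ∈ Ioo (-1 : ℝ) 1 ∧ s < ‖f x‖} = {x | s < ‖f x‖} ∩ Ioo (-1) 1 :=
    inter_comm _ _
  rw [distFun, hset, ← Measure.restrict_apply' measurableSet_Ioo]
  exact ENNReal.ofReal_toReal (measure_ne_top μI _)

lemma distFun_le_iff (ht : 0 ≤ t) : distFun f s ≤ t ↔ μI {x | s < ‖f x‖} ≤ ENNReal.ofReal t := by
  rw [← ofReal_distFun, ENNReal.ofReal_le_ofReal_iff ht]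

lemma antitone_distFun (f : ℝ → ℂ) : Antitone (distFun f) := fun s s' h ↦ by
  rw [distFun_le_iff (distFun_nonneg f s), ofReal_distFun]
  exact measure_mono fun x hx ↦ h.trans_lt hx

lemma nonempty_setOf_distFun_le (hf : AEStronglyMeasurable f μI) (ht : 0 < t) :
    {s | 0 ≤ s ∧ distFun f s ≤ t}.Nonempty := by
  have hlim : Tendsto (fun s : ℝ ↦ μI {x | s < ‖f x‖}) atTop (𝓝 0) := by
    have hempty : ⋂ s : ℝ, {x | s < ‖f x‖} = ∅ :=
      iInter_eq_empty_iff.2 fun x ↦ ⟨‖f x‖, by simp⟩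
    rw [← measure_empty (μ := μI), ← hempty]
    exact tendsto_measure_iInter_atTop
      (fun s ↦ nullMeasurableSet_lt aemeasurable_const hf.norm.aemeasurable)
      (fun s s' h x hx ↦ h.trans_lt hx) ⟨0, measure_ne_top _ _⟩
  obtain ⟨s, hs, hs0⟩ := ((hlim.eventually_le_const (ENNReal.ofReal_pos.2 ht)).and
    (eventually_ge_atTop 0)).exists
  exact ⟨s, hs0, (distFun_le_iff ht.le).2 hs⟩

lemma bddBelow_setOf_distFun_le (f : ℝ → ℂ) (t : ℝ) :
    BddBelow {s | 0 ≤ s ∧ distFun f s ≤ t} := ⟨0, fun _ h ↦ h.1⟩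

lemma decRearr_nonneg (f : ℝ → ℂ) (t : ℝ) : 0 ≤ decRearr f t := Real.sInf_nonneg fun _ h ↦ h.1

lemma distFun_decRearr_le (hf : AEStronglyMeasurable f μI) (ht : 0 < t) :
    distFun f (decRearr f t) ≤ t := by
  have hglb := isGLB_csInf (nonempty_setOf_distFun_le hf ht) (bddBelow_setOf_distFun_le f t)
  obtain ⟨u, hanti, -, hlim, hu⟩ :=
    hglb.exists_seq_antitone_tendsto (nonempty_setOf_distFun_le hf ht)
  have hunion : {x | decRearr f t < ‖f x‖} = ⋃ n, {x | u n < ‖f x‖} := by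
    change (‖f ·‖) ⁻¹' Ioi (decRearr f t) = _
    rw [decRearr, ← (isGLB_of_tendsto_atTop hanti hlim).iUnion_Ioi_eq, preimage_iUnion]
    rfl
  have hmono : Monotone fun n ↦ {x | u n < ‖f x‖} := fun m n h x hx ↦ (hanti h).trans_lt hx
  rw [distFun_le_iff ht.le, hunion, hmono.measure_iUnion]
  exact iSup_le fun n ↦ (distFun_le_iff ht.le).1 (hu n).2

lemma decRearr_le_iff (hf : AEStronglyMeasurable f μI) (hs : 0 ≤ s) (ht : 0 < t) :
    decRearr f t ≤ s ↔ distFun f s ≤ t :=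
  ⟨fun h ↦ (antitone_distFun f h).trans (distFun_decRearr_le hf ht),
    fun h ↦ csInf_le (bddBelow_setOf_distFun_le f t) ⟨hs, h⟩⟩

lemma antitoneOn_decRearr (hf : AEStronglyMeasurable f μI) : AntitoneOn (decRearr f) (Ioi 0) :=
  fun _ ht t' _ h ↦ csInf_le_csInf (bddBelow_setOf_distFun_le f t')
    (nonempty_setOf_distFun_le hf ht) fun _ hs ↦ ⟨hs.1, hs.2.trans h⟩

lemma aemeasurable_decRearr (hf : AEStronglyMeasurable f μI) :
    AEMeasurable (decRearr f) (volume.restrict (Ioo 0 2)) :=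
  aemeasurable_restrict_of_antitoneOn measurableSet_Ioo
    ((antitoneOn_decRearr hf).mono Ioo_subset_Ioi_self)

lemma measure_lt_decRearr (hf : AEStronglyMeasurable f μI) (s : ℝ) :
    volume.restrict (Ioo 0 2) {t | s < decRearr f t} = μI {x | s < ‖f x‖} := by
  rcases lt_or_ge s 0 with hs | hs
  · simp [hs.trans_le (decRearr_nonneg f _), hs.trans_le (norm_nonneg _), muI_univ]
  have hd : distFun f s ≤ 2 :=
    (distFun_le_iff zero_le_two).2 ((measure_mono (subset_univ _)).trans_eq (by simp [muI_univ]))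
  have hset : {t | s < decRearr f t} ∩ Ioo 0 2 = Ioo 0 (distFun f s) := by
    ext t
    refine ⟨fun ⟨h, ht, _⟩ ↦ ⟨ht, ?_⟩, fun ⟨ht, h⟩ ↦ ⟨?_, ht, h.trans_le hd⟩⟩
    · simpa using mt (decRearr_le_iff hf hs ht).2 (not_le.2 h)
    · simpa using mt (decRearr_le_iff hf hs ht).1 (not_le.2 h)
  rw [Measure.restrict_apply' measurableSet_Ioo, hset, Real.volume_Ioo, sub_zero, ofReal_distFun]

lemma identDistrib_decRearr (hf : AEStronglyMeasurable f μI) :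
    IdentDistrib (decRearr f) (fun x ↦ ‖f x‖) (volume.restrict (Ioo 0 2)) μI where
  aemeasurable_fst := aemeasurable_decRearr hf
  aemeasurable_snd := hf.norm.aemeasurable
  map_eq := by
    refine Measure.ext_of_Iic _ _ fun s ↦ ?_
    have hdec := aemeasurable_decRearr hf
    have hnorm := hf.norm.aemeasurable
    rw [← compl_Ioi, measure_compl measurableSet_Ioi (measure_ne_top _ _),
      measure_compl measurableSet_Ioi (measure_ne_top _ _),
      Measure.map_apply_of_aemeasurable hdec measurableSet_Ioi,
      Measure.map_apply_of_aemeasurable hdec MeasurableSet.univ,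
      Measure.map_apply_of_aemeasurable hnorm measurableSet_Ioi,
      Measure.map_apply_of_aemeasurable hnorm MeasurableSet.univ]
    congr 1
    · simp [muI_univ]
    · exact measure_lt_decRearr hf s

end DecreasingRearrangement

section LLogL

variable {f : ℝ → ℂ} {c t : ℝ}

lemma mul_le_mul_max_log_add_exp {a : ℝ} (ha : 0 ≤ a) (b : ℝ) :
    a * b ≤ a * max (Real.log a) 0 + Real.exp b := by
  rcases ha.eq_or_lt with rfl | ha
  · simp [(Real.exp_pos b).le]
  have hexp := Real.add_one_le_exp (b - Real.log a)
  rw [Real.exp_sub, Real.exp_log ha, le_div_iff₀ ha] at hexp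
  nlinarith [le_max_left (Real.log a) 0]

lemma integrableOn_of_memLlogL (hf : MemLlogL f) : IntegrableOn f (Ioo (-1) 1) :=
  (hf.2.add (integrableOn_const (C := Real.exp 1) (by simp))).mono' hf.1
    (.of_forall fun x ↦ by simpa using mul_le_mul_max_log_add_exp (norm_nonneg (f x)) 1)

lemma one_le_log_two_mul_exp_one_div (ht : t ∈ Ioo 0 2) :
    1 ≤ Real.log (2 * Real.exp 1 / t) := by
  have := ht.1
  rw [Real.le_log_iff_exp_le (by positivity), le_div_iff₀ ht.1, mul_comm]
  gcongr
  exact ht.2.le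

lemma decRearr_mul_log_nonneg (f : ℝ → ℂ) (ht : t ∈ Ioo 0 2) :
    0 ≤ decRearr f t * Real.log (2 * Real.exp 1 / t) :=
  mul_nonneg (decRearr_nonneg f t) (zero_le_one.trans (one_le_log_two_mul_exp_one_div ht))

lemma decRearr_mul_log_le (f : ℝ → ℂ) (ht : 0 < t) :
    decRearr f t * Real.log (2 * Real.exp 1 / t) ≤ Real.log (2 * Real.exp 1) * decRearr f t +
      2 * (decRearr f t * max (Real.log (decRearr f t)) 0 + t ^ (-1 / 2 : ℝ)) := by
  have hyoung := mul_le_mul_max_log_add_exp (decRearr_nonneg f t) (Real.log t * (-1 / 2))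
  rw [← Real.rpow_def_of_pos ht] at hyoung
  rw [Real.log_div (by positivity) ht.ne']
  linarith

lemma integrableOn_decRearr_mul_log (hf : MemLlogL f) :
    IntegrableOn (fun t ↦ decRearr f t * Real.log (2 * Real.exp 1 / t)) (Ioo 0 2) := by
  have hident := identDistrib_decRearr hf.1
  have hdec : IntegrableOn (decRearr f) (Ioo 0 2) :=
    hident.integrable_iff.2 (integrableOn_of_memLlogL hf).norm
  have hdeclog : IntegrableOn (fun t ↦ decRearr f t * max (Real.log (decRearr f t)) 0) (Ioo 0 2) :=
    (hident.comp (u := fun s ↦ s * max (Real.log s) 0) (by fun_prop)).integrable_iff.2 hf.2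
  have hpow : IntegrableOn (fun t : ℝ ↦ t ^ (-1 / 2 : ℝ)) (Ioo 0 2) :=
    (intervalIntegral.integrableOn_Ioo_rpow_iff zero_lt_two).2 (by norm_num)
  refine ((hdec.const_mul (Real.log (2 * Real.exp 1))).add
    ((hdeclog.add hpow).const_mul 2)).mono' ?_ ?_
  · exact ((aemeasurable_decRearr hf.1).mul (by fun_prop)).aestronglyMeasurable
  · filter_upwards [ae_restrict_mem measurableSet_Ioo] with t ht
    rw [Real.norm_of_nonneg (decRearr_mul_log_nonneg f ht)]
    exact decRearr_mul_log_le f ht.1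

lemma llogLNorm_nonneg (f : ℝ → ℂ) : 0 ≤ llogLNorm f :=
  setIntegral_nonneg measurableSet_Ioo fun _ ↦ decRearr_mul_log_nonneg f

lemma mul_decRearr_le_llogLNorm (hf : MemLlogL f) (ht : t ∈ Ioo 0 2) :
    t * decRearr f t ≤ llogLNorm f := by
  have hInt := integrableOn_decRearr_mul_log hf
  have hsub : Ioo 0 t ⊆ Ioo 0 2 := Ioo_subset_Ioo_right ht.2.le
  calc t * decRearr f t = ∫ _ in Ioo 0 t, decRearr f t := by simp [ht.1.le]
    _ ≤ ∫ u in Ioo 0 t, decRearr f u * Real.log (2 * Real.exp 1 / u) := by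
        refine setIntegral_mono_on (integrableOn_const (by simp)) (hInt.mono_set hsub)
          measurableSet_Ioo fun u hu ↦ ?_
        exact (antitoneOn_decRearr hf.1 hu.1 ht.1 hu.2.le).trans
          (le_mul_of_one_le_right (decRearr_nonneg f u) (one_le_log_two_mul_exp_one_div (hsub hu)))
    _ ≤ llogLNorm f :=
        setIntegral_mono_set hInt ((ae_restrict_mem measurableSet_Ioo).mono fun _ ↦
          decRearr_mul_log_nonneg f) hsub.eventuallyLE

lemma youngLLogL_decRearr_div_le (hf : MemLlogL f) (hc : 0 < c) (hN : llogLNorm f ≤ c)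
    (ht : t ∈ Ioo 0 2) :
    youngLLogL (decRearr f t / c) ≤ 2 / c * (decRearr f t * Real.log (2 * Real.exp 1 / t)) := by
  have ht0 := ht.1
  have hdec := decRearr_nonneg f t
  have hdiv : decRearr f t / c ≤ 1 / t := by
    rw [div_le_div_iff₀ hc ht0, mul_comm, one_mul]
    exact (mul_decRearr_le_llogLNorm hf ht).trans hN
  have hlog : Real.log (1 + decRearr f t / c) ≤ Real.log (2 * Real.exp 1 / t) := by
    refine Real.log_le_log (by positivity) ((add_le_add_right hdiv 1).trans ?_)
    rw [one_add_div ht0.ne']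
    gcongr
    linarith [ht.2, Real.add_one_le_exp 1]
  have hself : Real.log (1 + decRearr f t / c) ≤ decRearr f t / c := by
    linarith [Real.log_le_sub_one_of_pos (by positivity : 0 < 1 + decRearr f t / c)]
  calc youngLLogL (decRearr f t / c)
      ≤ decRearr f t / c + decRearr f t / c * Real.log (2 * Real.exp 1 / t) := by
        rw [youngLLogL, one_add_mul]
        gcongr
    _ ≤ decRearr f t / c * (2 * Real.log (2 * Real.exp 1 / t)) := by
        rw [two_mul (Real.log _), mul_add]
        gcongr
        exact le_mul_of_one_le_right (by positivity) (one_le_log_two_mul_exp_one_div ht)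
    _ = _ := by ring

lemma integrableOn_youngLLogL_decRearr_div (hf : MemLlogL f) (hc : 0 < c)
    (hN : llogLNorm f ≤ c) : IntegrableOn (fun t ↦ youngLLogL (decRearr f t / c)) (Ioo 0 2) := by
  refine ((integrableOn_decRearr_mul_log hf).const_mul (2 / c)).mono'
    (continuous_youngLLogL.measurable.comp_aemeasurable
      ((aemeasurable_decRearr hf.1).div_const c)).aestronglyMeasurable ?_
  filter_upwards [ae_restrict_mem measurableSet_Ioo] with t ht
  rw [Real.norm_of_nonneg (youngLLogL_nonneg (div_nonneg (decRearr_nonneg f t) hc.le))]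
  exact youngLLogL_decRearr_div_le hf hc hN ht

lemma identDistrib_youngLLogL_decRearr_div (hf : AEStronglyMeasurable f μI) (c : ℝ) :
    IdentDistrib (fun t ↦ youngLLogL (decRearr f t / c)) (fun x ↦ youngLLogL (‖f x‖ / c))
      (volume.restrict (Ioo 0 2)) μI :=
  (identDistrib_decRearr hf).comp (u := fun s ↦ youngLLogL (s / c))
    (continuous_youngLLogL.measurable.comp (measurable_id.div_const c))

lemma integrableOn_youngLLogL_norm_div (hf : MemLlogL f) (hc : 0 < c) (hN : llogLNorm f ≤ c) :
    IntegrableOn (fun x ↦ youngLLogL (‖f x‖ / c)) (Ioo (-1) 1) :=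
  (identDistrib_youngLLogL_decRearr_div hf.1 c).integrable_iff.1
    (integrableOn_youngLLogL_decRearr_div hf hc hN)

lemma integral_youngLLogL_norm_div_le (hf : MemLlogL f) (hc : 0 < c) (hN : llogLNorm f ≤ c) :
    ∫ x in Ioo (-1) 1, youngLLogL (‖f x‖ / c) ≤ 2 :=
  calc ∫ x in Ioo (-1) 1, youngLLogL (‖f x‖ / c)
      = ∫ t in Ioo 0 2, youngLLogL (decRearr f t / c) :=
        (identDistrib_youngLLogL_decRearr_div hf.1 c).integral_eq.symm
    _ ≤ ∫ t in Ioo 0 2, 2 / c * (decRearr f t * Real.log (2 * Real.exp 1 / t)) :=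
        setIntegral_mono_on (integrableOn_youngLLogL_decRearr_div hf hc hN)
          ((integrableOn_decRearr_mul_log hf).const_mul _) measurableSet_Ioo fun _ ↦
            youngLLogL_decRearr_div_le hf hc hN
    _ = 2 / c * llogLNorm f := integral_const_mul _ _
    _ ≤ 2 := by
        rw [div_mul_eq_mul_div, div_le_iff₀ hc]
        gcongr

end LLogL

section FiniteHilbertTransform

variable {f : ℝ → ℂ} {c : ℝ}

lemma FHT_eq_hilbertTransform_indicator (f : ℝ → ℂ) :
    FHT f = hilbertTransform ((Ioo (-1) 1).indicator f) := by
  ext t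
  have hmeas (ε : ℝ) : MeasurableSet {x : ℝ | x ∈ Ioo (-1 : ℝ) 1 ∧ ε ≤ |x - t|} :=
    measurableSet_Ioo.inter (measurableSet_le measurable_const (measurable_id.sub_const t).abs)
  unfold FHT hilbertTransform truncatedHilbertTransform
  congr 1 with ε
  rw [← integral_indicator (hmeas ε), ← integral_const_mul]
  congr 1 with x
  by_cases hx : x ∈ Ioo (-1 : ℝ) 1
  · by_cases hε : ε ≤ |x - t|
    · have hmem : x ∈ {x | x ∈ Ioo (-1 : ℝ) 1 ∧ ε ≤ |x - t|} := ⟨hx, hε⟩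
      rw [indicator_of_mem hmem, indicator_of_mem hx, truncatedHilbertKernel, if_pos hε,
        Complex.real_smul, mul_inv]
      push_cast
      ring
    · rw [indicator_of_notMem fun h ↦ hε h.2, truncatedHilbertKernel, if_neg hε, zero_smul,
        mul_zero]
  · rw [indicator_of_notMem fun h ↦ hx h.1, indicator_of_notMem hx, smul_zero, mul_zero]

lemma integrable_indicator_of_memLlogL (hf : MemLlogL f) :
    Integrable ((Ioo (-1) 1).indicator f) :=
  (integrable_indicator_iff measurableSet_Ioo).2 (integrableOn_of_memLlogL hf)

lemma aestronglyMeasurable_FHT (hf : MemLlogL f) : AEStronglyMeasurable (FHT f) := by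
  have hInt := integrable_indicator_of_memLlogL hf
  rw [FHT_eq_hilbertTransform_indicator]
  exact aestronglyMeasurable_hilbertTransform hInt.1 (ae_tendsto_truncatedHilbertTransform hInt)

lemma youngLLogL_norm_indicator_div (S : Set ℝ) (f : ℝ → ℂ) (c : ℝ) :
    (fun t ↦ youngLLogL (‖S.indicator f t‖ / c)) =
      S.indicator fun t ↦ youngLLogL (‖f t‖ / c) := by
  ext t
  by_cases ht : t ∈ S <;> simp [ht, youngLLogL]

lemma setLIntegral_enorm_FHT_le (hf : MemLlogL f) (hc : 0 < c) (hN : llogLNorm f ≤ c) :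
    ∫⁻ x in Ioo (-1) 1, ‖FHT f x‖ₑ ≤ ENNReal.ofReal (248 * π * c) := by
  have hψ := (integrable_indicator_iff measurableSet_Ioo).2
    (integrableOn_youngLLogL_norm_div hf hc hN)
  rw [← youngLLogL_norm_indicator_div] at hψ
  have hle := integral_youngLLogL_norm_div_le hf hc hN
  rw [← integral_indicator measurableSet_Ioo, ← youngLLogL_norm_indicator_div] at hle
  rw [FHT_eq_hilbertTransform_indicator]
  refine (setLIntegral_enorm_hilbertTransform_le
    (integrable_indicator_of_memLlogL hf).1 hc hψ).trans (ENNReal.ofReal_le_ofReal ?_)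
  nlinarith [mul_pos hc Real.pi_pos]

end FiniteHilbertTransform

end

/-- The finite Hilbert transform `T : L log L(-1,1) → L¹(-1,1)` is a bounded operator. -/
theorem FHT_bounded_LlogL_to_L1 :
    ∃ C : ℝ, 0 < C ∧ ∀ f : ℝ → ℂ, MemLlogL f →
      IntegrableOn (FHT f) (Set.Ioo (-1 : ℝ) 1) ∧
      ∫ t in Set.Ioo (-1 : ℝ) 1, ‖FHT f t‖ ≤ C * llogLNorm f := by
  refine ⟨248 * Real.pi, by positivity, fun f hf ↦ ?_⟩
  have hmeas := (aestronglyMeasurable_FHT hf).restrict (s := Ioo (-1 : ℝ) 1)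
  have hN := llogLNorm_nonneg f
  refine ⟨⟨hmeas, (setLIntegral_enorm_FHT_le hf (by positivity) (le_add_of_nonneg_right
    zero_le_one)).trans_lt ENNReal.ofReal_lt_top⟩, ?_⟩
  have hbound (c : ℝ) (hc : llogLNorm f < c) :
      ∫ t in Ioo (-1 : ℝ) 1, ‖FHT f t‖ ≤ 248 * Real.pi * c := by
    have hc0 := hN.trans_lt hc
    rw [integral_norm_eq_lintegral_enorm hmeas]
    exact ENNReal.toReal_le_of_le_ofReal (by positivity) (setLIntegral_enorm_FHT_le hf hc0 hc.le)
  rw [← div_le_iff₀' (by positivity)]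
  exact le_of_forall_gt_imp_ge_of_dense fun c hc ↦ (div_le_iff₀' (by positivity)).2 (hbound c hc)
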